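/- Levi-type ıSchur duality, first half (Theorem 3.5 = thm: main thm1): an operator A ∈ End_K(V̄^⊗m) commutes with Ξ(h) for every h in the duplex Hecke algebra 𝓗_m if and only if A belongs to Φ(L_q^ı). In other words, Φ(L_q^ı) = End_{𝓗_m}(V̄^⊗m) as subalgebras of End_K(V̄^⊗m). -/

import Mathlib

/-!
The inclusion of `Φ(L_q^ı)` in the commutant of `𝓗_m` is checked on generators. That the generators
of `Φ(L_q^ı)` commute with `Ψ(H_i)` is a computation on one or two tensor factors
(`commute_Rsw_of_mem`, `commute_R0op_of_mem`). They also preserve the decomposition of every tensor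
factor into `⟨η_{-r-3/2}⟩ ⊕ V ⊕ ⟨η_{r+3/2}⟩` (`mem_blockAlg`), because `ℬ_{±(r+1)}` is not among them;
hence they preserve `V^{⊗l} ⊗ η_{r+3/2}^{⊗(m-l)}` and its complement, and commute with `Ξ(x_σ^{(l)})`
(`commute_X`, `commute_of_generators`).

The converse is proved by specialisation at `q = 1`. By Nakayama's lemma over `ℚ[q]` at the ideal
`(q - 1)`, it suffices that every matrix with polynomial entries in the commutant has, at `q = 1`, the
same value as some element of `Φ` with entries regular at `q = 1` (`le_of_spec_le`).

* At `q = 1` the Hecke generators become the transpositions and the sign change `η_j ↦ η_{-j}`, so such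
  a value is a matrix invariant under the Weyl group of type `B` acting on pairs of multi-indices
  (`perm_invariant`, `flip_invariant`). Commuting with the projections `Ξ(x_e^{(l)})` and Weyl
  invariance force it to preserve the blocks in each position (`type_of_invariant`).
* Such a matrix is a linear combination of symmetrised pure tensors of the matrices
  `E_{a,b} + E_{-a,-b}` with `a, b` in the same block. Symmetrised pure tensors are polynomials in the derivations
  `∑ⱼ 1 ⊗ ⋯ ⊗ y ⊗ ⋯ ⊗ 1` (`sum_perm_mem`), so it lies in the algebra generated by the derivations of
  the `E_{a,b} + E_{-a,-b}` (`mem_of_invariant`).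
* These derivations are generated, under commutators, by the Chevalley and Cartan elements
  (`deriva_Fm_mem`), which are the values at `q = 1` of `ℬ_i` (for `i = 0`, of `ℬ_0 - 1`) and of
  `(𝕜_i - 1) / (q - 1)` (`deriva_Fm_mem_specOf`, `deriva_cartan_mem_specOf`).
-/

noncomputable section

open scoped BigOperators

set_option maxHeartbeats 1000000
set_option synthInstance.maxHeartbeats 400000

/-- The field `ℚ(q)`. -/
abbrev Kq : Type := RatFunc ℚ

/-- The element `q`, transcendental over `ℚ`. -/
def qv : Kq := RatFunc.X

/-- Index set `𝕀(2r+4)`: the `j`-th element represents the half-integer `j - r - 3/2`. -/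
abbrev Idx (r : ℕ) := Fin (2*r+4)

/-- The space `V̄`, with basis `η_j` indexed by `𝕀(2r+4)` (coordinate form). -/
abbrev Vb (r : ℕ) := Idx r → Kq

/-- The tensor power `V̄^⊗m` (coordinates with respect to the basis `M_f`). -/
abbrev TP (r m : ℕ) := (Fin m → Idx r) → Kq

/-- Basis vector `M_f = η_{f 0} ⊗ ⋯ ⊗ η_{f (m-1)}`. -/
def Mf {r m : ℕ} (f : Fin m → Idx r) : TP r m := Pi.single f 1

/-- For a quantum-group index `a : Fin (2r+3)` (representing `i = a - r - 1 ∈ [-r-1, r+1]`),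
the index of `η_{i - 1/2}`. -/
def loI {r : ℕ} (a : Fin (2*r+3)) : Idx r := ⟨a.1, by have := a.2; omega⟩

/-- The index of `η_{i + 1/2}`. -/
def hiI {r : ℕ} (a : Fin (2*r+3)) : Idx r := ⟨a.1+1, by have := a.2; omega⟩

/-- The index of `η_{-r-3/2}`. -/
def botI (r : ℕ) : Idx r := ⟨0, by omega⟩

/-- The index of `η_{r+3/2}`. -/
def topI (r : ℕ) : Idx r := ⟨2*r+3, by omega⟩

/-- A linear endomorphism of `V̄` of the shape `v ↦ (j ↦ c j * v (t j))`. -/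
def diagMove (r : ℕ) (c : Idx r → Kq) (t : Idx r → Idx r) : Module.End Kq (Vb r) where
  toFun v := fun j => c j * v (t j)
  map_add' u v := by funext j; simp [Pi.add_apply, mul_add]
  map_smul' s v := by
    funext j
    simp only [Pi.smul_apply, smul_eq_mul, RingHom.id_apply]
    ring

/-- The operator `e_i` on `V̄`: `e_i η_{i+1/2} = η_{i-1/2}`, zero on other basis vectors. -/
def opE (r : ℕ) (a : Fin (2*r+3)) : Module.End Kq (Vb r) :=
  diagMove r (fun j => if j = loI a then 1 else 0) (fun j => if j = loI a then hiI a else j)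

/-- The operator `f_i` on `V̄`: `f_i η_{i-1/2} = η_{i+1/2}`, zero on other basis vectors. -/
def opF (r : ℕ) (a : Fin (2*r+3)) : Module.End Kq (Vb r) :=
  diagMove r (fun j => if j = hiI a then 1 else 0) (fun j => if j = hiI a then loI a else j)

/-- The operator `κ_i` on `V̄`. -/
def opK (r : ℕ) (a : Fin (2*r+3)) : Module.End Kq (Vb r) :=
  diagMove r (fun j => if j = loI a then qv else if j = hiI a then qv⁻¹ else 1) id

/-- The operator `κ_i⁻¹` on `V̄`. -/
def opKinv (r : ℕ) (a : Fin (2*r+3)) : Module.End Kq (Vb r) :=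
  diagMove r (fun j => if j = loI a then qv⁻¹ else if j = hiI a then qv else 1) id

/-- A linear endomorphism of `V̄^⊗m` given by a "matrix" `c`. -/
def matOp (r m : ℕ) (c : (Fin m → Idx r) → (Fin m → Idx r) → Kq) : Module.End Kq (TP r m) where
  toFun v := fun g => ∑ f : Fin m → Idx r, c g f * v f
  map_add' u v := by
    funext g
    simp [Pi.add_apply, mul_add, Finset.sum_add_distrib]
  map_smul' s v := by
    funext g
    simp only [Pi.smul_apply, smul_eq_mul, RingHom.id_apply, Finset.mul_sum]
    exact Finset.sum_congr rfl (fun f _ => by ring)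

/-- The tensor product `A 0 ⊗ A 1 ⊗ ⋯ ⊗ A (m-1)` of endomorphisms of `V̄`,
as an endomorphism of `V̄^⊗m`. -/
def tensorOp (r m : ℕ) (A : Fin m → Module.End Kq (Vb r)) : Module.End Kq (TP r m) :=
  matOp r m (fun g f => ∏ k : Fin m, (A k) (Pi.single (f k) 1) (g k))
/-- `𝔼_i = Σ_j id^{⊗(j-1)} ⊗ e_i ⊗ (κ_i⁻¹)^{⊗(m-j)}` on `V̄^⊗m`. -/
def opEE (r m : ℕ) (a : Fin (2*r+3)) : Module.End Kq (TP r m) :=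
  ∑ j : Fin m, tensorOp r m (fun k =>
    if (k : ℕ) < (j : ℕ) then 1 else if k = j then opE r a else opKinv r a)

/-- `𝔽_i = Σ_j κ_i^{⊗(j-1)} ⊗ f_i ⊗ id^{⊗(m-j)}` on `V̄^⊗m`. -/
def opFF (r m : ℕ) (a : Fin (2*r+3)) : Module.End Kq (TP r m) :=
  ∑ j : Fin m, tensorOp r m (fun k =>
    if (k : ℕ) < (j : ℕ) then opK r a else if k = j then opF r a else 1)

/-- `𝕂_i = κ_i^{⊗m}`. -/
def opKK (r m : ℕ) (a : Fin (2*r+3)) : Module.End Kq (TP r m) :=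
  tensorOp r m (fun _ => opK r a)

/-- `𝕂_i⁻¹ = (κ_i⁻¹)^{⊗m}`. -/
def opKKinv (r m : ℕ) (a : Fin (2*r+3)) : Module.End Kq (TP r m) :=
  tensorOp r m (fun _ => opKinv r a)

/-- `𝕜_i = 𝕂_i 𝕂_{-i}⁻¹` (the index `-i` corresponds to `Fin.rev a`). -/
def opkk (r m : ℕ) (a : Fin (2*r+3)) : Module.End Kq (TP r m) :=
  opKK r m a * opKKinv r m a.rev

/-- `𝕜_i⁻¹ = 𝕂_{-i} 𝕂_i⁻¹`. -/
def opkkInv (r m : ℕ) (a : Fin (2*r+3)) : Module.End Kq (TP r m) :=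
  opKK r m a.rev * opKKinv r m a

/-- The index `a` corresponding to `i = 0`. -/
def midI (r : ℕ) : Fin (2*r+3) := ⟨r+1, by omega⟩

/-- `ℬ_i = 𝔼_i + 𝔽_{-i} 𝕂_i⁻¹` for `i ≠ 0`. -/
def opB (r m : ℕ) (a : Fin (2*r+3)) : Module.End Kq (TP r m) :=
  opEE r m a + opFF r m a.rev * opKKinv r m a

/-- `ℬ_0 = 𝔼_0 + q 𝔽_0 𝕂_0⁻¹ + 𝕂_0⁻¹`. -/
def opB0 (r m : ℕ) : Module.End Kq (TP r m) :=
  opEE r m (midI r) + qv • (opFF r m (midI r) * opKKinv r m (midI r)) + opKKinv r m (midI r)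

/-- Generating set of the Levi-type ıquantum group image `Φ(L_q^ı)`:
`ℬ_0`, the `ℬ_i` with `0 ≠ i`, `-r ≤ i ≤ r`, and the `𝕜_i^{±1}` with `-r-1 ≤ i ≤ r+1`. -/
def LeviSet (r m : ℕ) : Set (Module.End Kq (TP r m)) :=
  {opB0 r m} ∪ (opB r m '' {a | a ≠ midI r ∧ 0 < (a : ℕ) ∧ (a : ℕ) < 2*r+2}) ∪
    Set.range (opkk r m) ∪ Set.range (opkkInv r m)

/-- `Φ(L_q^ı)`, the image of the Levi-type ıquantum group in `End(V̄^⊗m)`. -/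
def PhiL (r m : ℕ) : Subalgebra Kq (Module.End Kq (TP r m)) :=
  Algebra.adjoin Kq (LeviSet r m)

/-- The operator `Ψ(H_0)` on `V̄^⊗m`. -/
def R0op (r m : ℕ) : Module.End Kq (TP r m) :=
  if h : 0 < m then
    { toFun := fun v g =>
        v (Function.update g ⟨0, h⟩ (Fin.rev (g ⟨0, h⟩))) +
          (if g ⟨0, h⟩ < Fin.rev (g ⟨0, h⟩) then (qv⁻¹ - qv) * v g else 0)
      map_add' := fun u v => by
        funext g
        simp only [Pi.add_apply]
        split_ifs <;> ring
      map_smul' := fun s v => by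
        funext g
        simp only [Pi.smul_apply, smul_eq_mul, RingHom.id_apply]
        split_ifs <;> ring }
  else 1

/-- The operator `Ψ(H_{p+1})` on `V̄^⊗m`, interchanging tensor positions `p` and `p+1`
(0-based). -/
def Rsw (r m : ℕ) (p : ℕ) : Module.End Kq (TP r m) :=
  if h : p + 1 < m then
    { toFun := fun v g =>
        if g ⟨p, by omega⟩ = g ⟨p+1, h⟩ then qv⁻¹ * v g
        else v (g ∘ Equiv.swap ⟨p, by omega⟩ ⟨p+1, h⟩) +
          (if g ⟨p+1, h⟩ < g ⟨p, by omega⟩ then (qv⁻¹ - qv) * v g else 0)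
      map_add' := fun u v => by
        funext g
        simp only [Pi.add_apply, Function.comp_apply]
        split_ifs <;> ring
      map_smul' := fun s v => by
        funext g
        simp only [Pi.smul_apply, smul_eq_mul, RingHom.id_apply, Function.comp_apply]
        split_ifs <;> ring }
  else 1

/-- The operator `Ψ(H_i)` on `V̄^⊗m`, for `0 ≤ i ≤ m-1`. -/
def RopN (r m : ℕ) (i : ℕ) : Module.End Kq (TP r m) :=
  if i = 0 then R0op r m else Rsw r m (i - 1)
/-- `j ∈ 𝕀(2r+2)`, i.e. `η_j ∈ V`. -/
def innerI (r : ℕ) (j : Idx r) : Prop := j ≠ botI r ∧ j ≠ topI r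

/-- `f` indexes a basis vector of `V^{⊗l} ⊗ η_{r+3/2}^{⊗(m-l)}`. -/
def goodF (r m : ℕ) (l : ℕ) (f : Fin m → Idx r) : Prop :=
  ∀ k : Fin m, ((k : ℕ) < l → innerI r (f k)) ∧ (l ≤ (k : ℕ) → f k = topI r)

/-- The subspace `V̄_{{1,…,l},∅} = V^{⊗l} ⊗ η_{r+3/2}^{⊗(m-l)}` of `V̄^⊗m`. -/
def Vsub (r m : ℕ) (l : ℕ) : Submodule Kq (TP r m) :=
  Submodule.span Kq {v | ∃ f, goodF r m l f ∧ v = Mf f}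

/-- The subspace `V̄_{I,J}` of `V̄^⊗m`. -/
def VIJ (r m : ℕ) (I J : Finset (Fin m)) : Submodule Kq (TP r m) :=
  Submodule.span Kq {v | ∃ f : Fin m → Idx r,
    (∀ k : Fin m, (k ∈ I → innerI r (f k)) ∧ (k ∈ J → f k = botI r) ∧
      (k ∉ I → k ∉ J → f k = topI r)) ∧ v = Mf f}

/-- The subspace `V̄_l = ⊕_{#I = l, J} V̄_{I,J}` of `V̄^⊗m`. -/
def Vlevel (r m : ℕ) (l : ℕ) : Submodule Kq (TP r m) :=
  Submodule.span Kq {v | ∃ f : Fin m → Idx r,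
    Nat.card {k : Fin m // innerI r (f k)} = l ∧ v = Mf f}

/-- The length (number of inversions) of a permutation of `{0, …, l-1}`. -/
def lenPerm {l : ℕ} (σ : Equiv.Perm (Fin l)) : ℕ :=
  (Finset.univ.filter (fun p : Fin l × Fin l => p.1 < p.2 ∧ σ p.2 < σ p.1)).card

/-- The simple transposition interchanging `p` and `p+1` (0-based) in `𝔖_l`;
this is the paper's `s_{p+1}`. -/
def adjSwap (l : ℕ) (p : ℕ) : Equiv.Perm (Fin l) :=
  if h : p + 1 < l then Equiv.swap ⟨p, by omega⟩ ⟨p+1, h⟩ else 1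

/-- The first descent of a permutation, if any. -/
def descentIdx {l : ℕ} (σ : Equiv.Perm (Fin l)) : Option ℕ :=
  (List.range l).find? (fun p =>
    if h : p + 1 < l then decide (σ ⟨p+1, h⟩ < σ ⟨p, by omega⟩) else false)

/-- Canonical reduced word construction (with fuel). -/
def permWordAux {l : ℕ} : ℕ → Equiv.Perm (Fin l) → List ℕ
  | 0, _ => []
  | (fuel+1), σ =>
    match descentIdx σ with
    | none => []
    | some p => permWordAux fuel (σ * adjSwap l p) ++ [p]

/-- A canonical reduced word for `σ`: `σ = s_{p₁+1} ⋯ s_{p_k+1}` (paper indexing)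
where `permWord σ = [p₁, …, p_k]`, and `k = ℓ(σ)`. -/
def permWord {l : ℕ} (σ : Equiv.Perm (Fin l)) : List ℕ := permWordAux (lenPerm σ) σ

/-- The operator `Ψ(H_σ)` on `V̄^⊗m` for a permutation `σ ∈ 𝔖_l` (`l ≤ m`), where
`H_σ = H_{i₁} ⋯ H_{i_k}` for a reduced expression `σ = s_{i₁} ⋯ s_{i_k}`; since `Ψ` is an
anti-homomorphism this is the product of the `Ψ(H_i)` in reversed order. -/
def opPerm (r m : ℕ) {l : ℕ} (σ : Equiv.Perm (Fin l)) : Module.End Kq (TP r m) :=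
  (((permWord σ).map (fun p => RopN r m (p+1))).reverse).prod

/-- `A` is a finite product of the operators `Ψ(H_i)^{±1}`, `0 ≤ i ≤ m-1`. -/
def IsRWord (r m : ℕ) (A : Module.End Kq (TP r m)) : Prop :=
  ∃ ws : List (Module.End Kq (TP r m)), A = ws.prod ∧
    ∀ u ∈ ws, ∃ i : ℕ, i < m ∧
      (u = RopN r m i ∨ (u * RopN r m i = 1 ∧ RopN r m i * u = 1))
/-- Generator `H_i` of the free algebra on `m` letters. -/
def Hvar (m : ℕ) (i : Fin m) : FreeAlgebra Kq (Fin m) := FreeAlgebra.ι Kq i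

/-- The defining relations of the Iwahori–Hecke algebra `H(B_m)` of type `B_m`. -/
inductive HBrel (m : ℕ) : FreeAlgebra Kq (Fin m) → FreeAlgebra Kq (Fin m) → Prop
  | quad (i : Fin m) :
      HBrel m ((Hvar m i - algebraMap Kq _ qv⁻¹) * (Hvar m i + algebraMap Kq _ qv)) 0
  | braid (i : ℕ) (h1 : 1 ≤ i) (h2 : i + 1 < m) :
      HBrel m (Hvar m ⟨i, by omega⟩ * Hvar m ⟨i+1, h2⟩ * Hvar m ⟨i, by omega⟩)
              (Hvar m ⟨i+1, h2⟩ * Hvar m ⟨i, by omega⟩ * Hvar m ⟨i+1, h2⟩)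
  | comm (i j : Fin m) (h : (i : ℕ) + 1 < (j : ℕ) ∨ (j : ℕ) + 1 < (i : ℕ)) :
      HBrel m (Hvar m i * Hvar m j) (Hvar m j * Hvar m i)
  | braid0 (h : 1 < m) :
      HBrel m (Hvar m ⟨0, by omega⟩ * Hvar m ⟨1, h⟩ * Hvar m ⟨0, by omega⟩ * Hvar m ⟨1, h⟩)
              (Hvar m ⟨1, h⟩ * Hvar m ⟨0, by omega⟩ * Hvar m ⟨1, h⟩ * Hvar m ⟨0, by omega⟩)

/-- The Iwahori–Hecke algebra `H(B_m)` of type `B_m` over `ℚ(q)`. -/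
abbrev HeckeB (m : ℕ) := RingQuot (HBrel m)

/-- The generator `H_i ∈ H(B_m)`. -/
def Hgen (m : ℕ) (i : Fin m) : HeckeB m := RingQuot.mkAlgHom Kq (HBrel m) (Hvar m i)

/-- The generator `H_j ∈ H(B_m)` with out-of-range indices sent to `1`. -/
def HgenN (m : ℕ) (j : ℕ) : HeckeB m := if h : j < m then Hgen m ⟨j, h⟩ else 1

/-- The element `H_w ∈ H(B_m)` for `w ∈ 𝔖_m ⊂ 𝒲(B_m)`, defined via a reduced expression
for `w` (well defined by Matsumoto's theorem). -/
def HpermB (m : ℕ) (w : Equiv.Perm (Fin m)) : HeckeB m :=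
  ((permWord w).map (fun p => HgenN m (p+1))).prod

/-- Generators of the duplex Hecke algebra: the `T_i` and the `x_σ^{(l)}`. -/
def DGen (m : ℕ) : Type := (Fin m) ⊕ (Σ l : Fin (m+1), Equiv.Perm (Fin (l : ℕ)))

/-- The generator `T_i` of the free algebra. -/
def Tvar (m : ℕ) (i : Fin m) : FreeAlgebra Kq (DGen m) := FreeAlgebra.ι Kq (Sum.inl i)

/-- The generator `x_σ^{(l)}` of the free algebra. -/
def Xvar (m : ℕ) (l : Fin (m+1)) (σ : Equiv.Perm (Fin (l : ℕ))) : FreeAlgebra Kq (DGen m) :=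
  FreeAlgebra.ι Kq (Sum.inr ⟨l, σ⟩)

/-- The defining relations of the duplex Hecke algebra `𝓗_m` of type `B`. -/
inductive DHrel (m : ℕ) : FreeAlgebra Kq (DGen m) → FreeAlgebra Kq (DGen m) → Prop
  | quadT (i : Fin m) :
      DHrel m ((Tvar m i + algebraMap Kq _ qv) * (Tvar m i - algebraMap Kq _ qv⁻¹)) 0
  | braidT (i : ℕ) (h1 : 1 ≤ i) (h2 : i + 1 < m) :
      DHrel m (Tvar m ⟨i, by omega⟩ * Tvar m ⟨i+1, h2⟩ * Tvar m ⟨i, by omega⟩)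
              (Tvar m ⟨i+1, h2⟩ * Tvar m ⟨i, by omega⟩ * Tvar m ⟨i+1, h2⟩)
  | commT (i j : Fin m) (h : (i : ℕ) + 1 < (j : ℕ) ∨ (j : ℕ) + 1 < (i : ℕ)) :
      DHrel m (Tvar m i * Tvar m j) (Tvar m j * Tvar m i)
  | braid0T (h : 1 < m) :
      DHrel m (Tvar m ⟨0, by omega⟩ * Tvar m ⟨1, h⟩ * Tvar m ⟨0, by omega⟩ * Tvar m ⟨1, h⟩)
              (Tvar m ⟨1, h⟩ * Tvar m ⟨0, by omega⟩ * Tvar m ⟨1, h⟩ * Tvar m ⟨0, by omega⟩)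
  | xRightUp (l : Fin (m+1)) (σ : Equiv.Perm (Fin (l : ℕ))) (p : ℕ) (hp : p + 1 < (l : ℕ))
      (hlen : lenPerm (σ * adjSwap (l : ℕ) p) = lenPerm σ + 1) :
      DHrel m (Xvar m l σ * Xvar m l (adjSwap (l : ℕ) p)) (Xvar m l (σ * adjSwap (l : ℕ) p))
  | xRightDown (l : Fin (m+1)) (σ : Equiv.Perm (Fin (l : ℕ))) (p : ℕ) (hp : p + 1 < (l : ℕ))
      (hlen : lenPerm (σ * adjSwap (l : ℕ) p) + 1 = lenPerm σ) :
      DHrel m (Xvar m l σ * Xvar m l (adjSwap (l : ℕ) p))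
              (Xvar m l (σ * adjSwap (l : ℕ) p) + algebraMap Kq _ (qv⁻¹ - qv) * Xvar m l σ)
  | xLeftUp (l : Fin (m+1)) (σ : Equiv.Perm (Fin (l : ℕ))) (p : ℕ) (hp : p + 1 < (l : ℕ))
      (hlen : lenPerm (adjSwap (l : ℕ) p * σ) = lenPerm σ + 1) :
      DHrel m (Xvar m l (adjSwap (l : ℕ) p) * Xvar m l σ) (Xvar m l (adjSwap (l : ℕ) p * σ))
  | xLeftDown (l : Fin (m+1)) (σ : Equiv.Perm (Fin (l : ℕ))) (p : ℕ) (hp : p + 1 < (l : ℕ))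
      (hlen : lenPerm (adjSwap (l : ℕ) p * σ) + 1 = lenPerm σ) :
      DHrel m (Xvar m l (adjSwap (l : ℕ) p) * Xvar m l σ)
              (Xvar m l (adjSwap (l : ℕ) p * σ) + algebraMap Kq _ (qv⁻¹ - qv) * Xvar m l σ)
  | xOrtho (l k : Fin (m+1)) (h : l ≠ k) (σ : Equiv.Perm (Fin (l : ℕ)))
      (γ : Equiv.Perm (Fin (k : ℕ))) :
      DHrel m (Xvar m l σ * Xvar m k γ) 0
  | TxMid (i : ℕ) (l : Fin (m+1)) (h0 : 0 < i) (hil : i < (l : ℕ))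
      (σ : Equiv.Perm (Fin (l : ℕ))) :
      DHrel m (Tvar m ⟨i, by have := l.2; omega⟩ * Xvar m l σ)
              (Xvar m l (adjSwap (l : ℕ) (i-1)) * Xvar m l σ)
  | xTMid (i : ℕ) (l : Fin (m+1)) (h0 : 0 < i) (hil : i < (l : ℕ))
      (σ : Equiv.Perm (Fin (l : ℕ))) :
      DHrel m (Xvar m l σ * Tvar m ⟨i, by have := l.2; omega⟩)
              (Xvar m l σ * Xvar m l (adjSwap (l : ℕ) (i-1)))
  | TxBig (i : Fin m) (l : Fin (m+1)) (h : (l : ℕ) < (i : ℕ)) (σ : Equiv.Perm (Fin (l : ℕ))) :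
      DHrel m (Tvar m i * Xvar m l σ) (algebraMap Kq _ qv⁻¹ * Xvar m l σ)
  | xTBig (i : Fin m) (l : Fin (m+1)) (h : (l : ℕ) < (i : ℕ)) (σ : Equiv.Perm (Fin (l : ℕ))) :
      DHrel m (Xvar m l σ * Tvar m i) (algebraMap Kq _ qv⁻¹ * Xvar m l σ)

/-- The duplex Hecke algebra `𝓗_m` of type `B` over `ℚ(q)`. -/
abbrev DuplexH (m : ℕ) := RingQuot (DHrel m)

/-- The generator `T_i ∈ 𝓗_m`. -/
def Tg (m : ℕ) (i : Fin m) : DuplexH m := RingQuot.mkAlgHom Kq (DHrel m) (Tvar m i)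

/-- The generator `x_σ^{(l)} ∈ 𝓗_m`. -/
def Xg (m : ℕ) (l : Fin (m+1)) (σ : Equiv.Perm (Fin (l : ℕ))) : DuplexH m :=
  RingQuot.mkAlgHom Kq (DHrel m) (Xvar m l σ)

/-! ### Pure tensors of matrices -/

section Tens

set_option linter.unusedSectionVars false

variable {n R : Type*} [Fintype n] [DecidableEq n] [CommRing R] {m : ℕ}

/-- The matrix of `x 0 ⊗ ⋯ ⊗ x (m-1)` on the `m`-th tensor power, indexed by multi-indices. -/
def tens (x : Fin m → Matrix n n R) : Matrix (Fin m → n) (Fin m → n) R :=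
  Matrix.of fun g f => ∏ k, x k (g k) (f k)

lemma tens_apply (x : Fin m → Matrix n n R) (g f : Fin m → n) :
    tens x g f = ∏ k, x k (g k) (f k) := rfl

lemma tens_mul (x y : Fin m → Matrix n n R) : tens x * tens y = tens (x * y) := by
  ext g f
  simp only [Matrix.mul_apply, tens_apply, Pi.mul_apply, ← Finset.prod_mul_distrib]
  rw [Finset.prod_univ_sum, Fintype.piFinset_univ]

lemma tens_one : tens (1 : Fin m → Matrix n n R) = 1 := by
  ext g f
  simp only [tens_apply, Pi.one_apply, Matrix.one_apply]
  rw [Finset.prod_ite_zero]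
  simp [funext_iff]

lemma tens_update_apply (x : Fin m → Matrix n n R) (j : Fin m) (y : Matrix n n R)
    (g f : Fin m → n) :
    tens (Function.update x j y) g f =
      y (g j) (f j) * ∏ k ∈ Finset.univ.erase j, x k (g k) (f k) := by
  rw [tens_apply, ← Finset.mul_prod_erase _ _ (Finset.mem_univ j)]
  congr 1
  · simp
  · exact Finset.prod_congr rfl fun k hk => by simp [Finset.ne_of_mem_erase hk]

lemma tens_update_add (x : Fin m → Matrix n n R) (j : Fin m) (y z : Matrix n n R) :
    tens (Function.update x j (y + z)) =
      tens (Function.update x j y) + tens (Function.update x j z) := by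
  ext g f
  simp [tens_update_apply, add_mul]

lemma tens_update_smul (x : Fin m → Matrix n n R) (j : Fin m) (c : R) (y : Matrix n n R) :
    tens (Function.update x j (c • y)) = c • tens (Function.update x j y) := by
  ext g f
  simp [tens_update_apply, mul_assoc]

/-- The derivation `∑ⱼ 1 ⊗ ⋯ ⊗ y ⊗ ⋯ ⊗ 1` (with `y` in position `j`) of the tensor power. -/
def deriva (m : ℕ) (y : Matrix n n R) : Matrix (Fin m → n) (Fin m → n) R :=
  ∑ j, tens (Function.update 1 j y)

lemma deriva_add (y z : Matrix n n R) : deriva m (y + z) = deriva m y + deriva m z := by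
  simp [deriva, tens_update_add, Finset.sum_add_distrib]

lemma deriva_smul (c : R) (y : Matrix n n R) : deriva m (c • y) = c • deriva m y := by
  simp [deriva, tens_update_smul, Finset.smul_sum]

variable (n R) in
/-- `deriva` as a linear map. -/
def derivaLin (m : ℕ) : Matrix n n R →ₗ[R] Matrix (Fin m → n) (Fin m → n) R where
  toFun := deriva m
  map_add' := deriva_add
  map_smul' := deriva_smul

lemma deriva_mul_tens (y : Matrix n n R) (z : Fin m → Matrix n n R) :
    deriva m y * tens z = ∑ j, tens (Function.update z j (y * z j)) := by
  rw [deriva, Finset.sum_mul]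
  refine Finset.sum_congr rfl fun j _ => ?_
  rw [tens_mul]
  congr 1
  funext k
  by_cases h : k = j
  · subst h; simp
  · simp [h]

/-- `deriva` is a homomorphism of Lie algebras. -/
lemma deriva_comm (y z : Matrix n n R) :
    deriva m y * deriva m z - deriva m z * deriva m y = deriva m (y * z - z * y) := by
  have h : ∀ y z : Matrix n n R, deriva m y * deriva m z = deriva m (y * z) +
      ∑ j, ∑ k ∈ Finset.univ.erase j,
        tens (Function.update (Function.update (1 : Fin m → Matrix n n R) j z) k y) := by
    intro y z
    rw [show deriva m z = ∑ j, tens (Function.update 1 j z) from rfl, Finset.mul_sum,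
      show deriva m (y * z) = ∑ j, tens (Function.update 1 j (y * z)) from rfl, ← Finset.sum_add_distrib]
    refine Finset.sum_congr rfl fun j _ => ?_
    rw [deriva_mul_tens, ← Finset.add_sum_erase _ _ (Finset.mem_univ j)]
    congr 1
    · simp
    · refine Finset.sum_congr rfl fun k hk => ?_
      simp [Finset.ne_of_mem_erase hk]
  have h2 : ∀ y z : Matrix n n R, (∑ j : Fin m, ∑ k ∈ Finset.univ.erase j,
        tens (Function.update (Function.update (1 : Fin m → Matrix n n R) j z) k y)) =
      ∑ j : Fin m, ∑ k ∈ Finset.univ.erase j,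
        tens (Function.update (Function.update (1 : Fin m → Matrix n n R) j y) k z) := by
    intro y z
    rw [Finset.sum_comm' (t' := Finset.univ) (s' := fun k => Finset.univ.erase k)
      (by intro x y; simp [eq_comm])]
    refine Finset.sum_congr rfl fun j _ => Finset.sum_congr rfl fun k hk => ?_
    rw [Function.update_comm (Finset.ne_of_mem_erase hk)]
  have h3 : deriva m (y * z - z * y) = deriva m (y * z) - deriva m (z * y) :=
    map_sub (derivaLin n R m) _ _
  rw [h y z, h z y, h2 y z, h3]
  abel

/-- If `S` is a subalgebra containing the derivations attached to a multiplicatively closed set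
`a`, then `S` contains the sum of all ways of distributing `k` elements of `a` over distinct
tensor positions. Multiplying such a sum by one more derivation either uses a new position or
multiplies an element already placed; the terms of the second kind are known by induction. -/
lemma sum_embedding_mem (S : Subalgebra R (Matrix (Fin m → n) (Fin m → n) R))
    (a : Set (Matrix n n R)) (hmul : ∀ x ∈ a, ∀ y ∈ a, x * y ∈ a)
    (hD : ∀ y ∈ a, deriva m y ∈ S) (k : ℕ) :
    ∀ x : Fin k → Matrix n n R, (∀ i, x i ∈ a) →
      ∑ φ : Fin k ↪ Fin m, tens (Function.extend φ x 1) ∈ S := by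
  induction k with
  | zero =>
    intro x _
    refine Subalgebra.sum_mem _ fun φ _ => ?_
    have : Function.extend φ x 1 = 1 := by
      funext j
      rw [Function.extend_apply' _ _ _ (by rintro ⟨i, _⟩; exact i.elim0)]
    rw [this, tens_one]
    exact S.one_mem
  | succ k ih =>
    intro x hx
    have key : deriva m (x 0) *
          ∑ φ : Fin k ↪ Fin m, tens (Function.extend φ (Fin.tail x) 1) =
        (∑ φ : Fin (k + 1) ↪ Fin m, tens (Function.extend φ x 1)) +
        ∑ i : Fin k, ∑ φ : Fin k ↪ Fin m,
          tens (Function.extend φ (Function.update (Fin.tail x) i (x 0 * Fin.tail x i)) 1) := by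
      rw [Finset.mul_sum, Finset.sum_comm,
        ← Equiv.sum_comp (Equiv.embeddingFinSucc k (Fin m)).symm, Fintype.sum_sigma,
        ← Finset.sum_add_distrib]
      refine Finset.sum_congr rfl fun φ _ => ?_
      classical
      rw [deriva_mul_tens, ← Finset.sum_filter_add_sum_filter_not Finset.univ
        (fun j => j ∉ Set.range φ)]
      congr 1
      · rw [Finset.sum_subtype (p := fun j => j ∉ Set.range φ) _ (by simp)]
        refine Finset.sum_congr rfl fun j _ => ?_
        congr 1
        set ψ := (Equiv.embeddingFinSucc k (Fin m)).symm ⟨φ, j⟩ with hψ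
        have h0 : ψ 0 = j := by simp [hψ]
        have hs : ∀ i : Fin k, ψ i.succ = φ i := by intro i; simp [hψ]
        funext l
        by_cases hl : l = j
        · subst hl
          rw [Function.update_self, Function.extend_apply' _ _ _ (by simpa using j.2), ← h0,
            ψ.injective.extend_apply]
          simp
        · rw [Function.update_of_ne hl]
          by_cases hr : ∃ i, φ i = l
          · obtain ⟨i, rfl⟩ := hr
            rw [φ.injective.extend_apply, ← hs, ψ.injective.extend_apply]
            rfl
          · rw [Function.extend_apply' _ _ _ hr, Function.extend_apply']
            rintro ⟨i, hi⟩
            induction i using Fin.cases with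
            | zero => exact hl (by rw [← hi, h0])
            | succ i => exact hr ⟨i, by rw [← hi, hs]⟩
      · rw [show Finset.univ.filter (fun j => ¬ j ∉ Set.range φ) = Finset.univ.map φ by
          ext; simp, Finset.sum_map]
        refine Finset.sum_congr rfl fun i _ => ?_
        congr 1
        funext l
        by_cases hr : ∃ i, φ i = l
        · obtain ⟨i', rfl⟩ := hr
          rw [φ.injective.extend_apply, φ.injective.extend_apply]
          by_cases hi : i' = i
          · subst hi; simp
          · rw [Function.update_of_ne hi, Function.update_of_ne (φ.injective.ne hi),
              φ.injective.extend_apply]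
        · rw [Function.update_of_ne (by rintro rfl; exact hr ⟨i, rfl⟩),
            Function.extend_apply' _ _ _ hr, Function.extend_apply' _ _ _ hr]
    have ht : ∀ i, Fin.tail x i ∈ a := fun i => hx _
    rw [← sub_eq_iff_eq_add] at key
    rw [← key]
    refine S.sub_mem (S.mul_mem (hD _ (hx 0)) (ih _ ht)) (Subalgebra.sum_mem _ fun i _ => ih _ ?_)
    intro i'
    by_cases hi : i' = i
    · subst hi; simpa using hmul _ (hx 0) _ (ht i')
    · simpa [hi] using ht i'

/-- Symmetrised pure tensors lie in any subalgebra containing the derivations. -/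
lemma sum_perm_mem (S : Subalgebra R (Matrix (Fin m → n) (Fin m → n) R))
    (a : Set (Matrix n n R)) (hmul : ∀ x ∈ a, ∀ y ∈ a, x * y ∈ a)
    (hD : ∀ y ∈ a, deriva m y ∈ S) (x : Fin m → Matrix n n R) (hx : ∀ i, x i ∈ a) :
    ∑ σ : Equiv.Perm (Fin m), tens (x ∘ σ) ∈ S := by
  have h := sum_embedding_mem S a hmul hD m x hx
  rw [← Equiv.sum_comp (Equiv.embeddingEquivOfFinite (Fin m)).symm,
    ← Equiv.sum_comp (Equiv.inv (Equiv.Perm (Fin m)))] at h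
  convert h using 3 with σ
  funext j
  have h1 := (((Equiv.embeddingEquivOfFinite (Fin m)).symm σ⁻¹).injective.extend_apply
    x 1 (σ j)).symm
  have h2 : ((Equiv.embeddingEquivOfFinite (Fin m)).symm σ⁻¹) (σ j) = j := by
    change σ⁻¹ (σ j) = j
    simp
  rw [h2] at h1
  exact h1

end Tens

/-! ### Specialisation at `q = 1` -/

section Spec

open Polynomial

/-- The graph of evaluation at `q = 1` on the ring of rational functions regular at `1`:
`(x, c) ∈ specAlg` says that `x = p / d` with `d(1) = 1` and `p(1) = c`. -/
def specAlg : Subalgebra ℚ (Kq × ℚ) where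
  carrier := {x | ∃ p d : ℚ[X], d.eval 1 = 1 ∧ p.eval 1 = x.2 ∧
    x.1 * algebraMap ℚ[X] Kq d = algebraMap ℚ[X] Kq p}
  mul_mem' := by
    rintro ⟨x, c⟩ ⟨x', c'⟩ ⟨p, d, hd, hp, h⟩ ⟨p', d', hd', hp', h'⟩
    refine ⟨p * p', d * d', by simp_all, by simp_all, ?_⟩
    simp only [Prod.fst_mul, map_mul] at *
    rw [← h, ← h']; ring
  add_mem' := by
    rintro ⟨x, c⟩ ⟨x', c'⟩ ⟨p, d, hd, hp, h⟩ ⟨p', d', hd', hp', h'⟩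
    refine ⟨p * d' + p' * d, d * d', by simp_all, by simp_all, ?_⟩
    simp only [Prod.fst_add, map_mul, map_add] at *
    rw [← h, ← h']; ring
  algebraMap_mem' c := by
    refine ⟨C c, 1, by simp, by simp, ?_⟩
    simp only [Prod.algebraMap_apply, map_one, mul_one]
    exact IsScalarTower.algebraMap_apply ℚ ℚ[X] Kq c

lemma spec_qv : ((qv, 1) : Kq × ℚ) ∈ specAlg :=
  ⟨X, 1, by simp, by simp, by simp [qv]⟩

lemma qv_ne_zero : qv ≠ 0 := RatFunc.X_ne_zero

lemma spec_qv_inv : ((qv⁻¹, 1) : Kq × ℚ) ∈ specAlg :=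
  ⟨1, X, by simp, by simp, by
    have := qv_ne_zero
    simp only [qv, RatFunc.algebraMap_X, map_one] at *
    exact inv_mul_cancel₀ this⟩

lemma spec_zero : ((0, 0) : Kq × ℚ) ∈ specAlg := specAlg.zero_mem

lemma spec_one : ((1, 1) : Kq × ℚ) ∈ specAlg := specAlg.one_mem

lemma spec_sum {ι : Type*} (s : Finset ι) (x : ι → Kq) (c : ι → ℚ)
    (h : ∀ i ∈ s, (x i, c i) ∈ specAlg) : (∑ i ∈ s, x i, ∑ i ∈ s, c i) ∈ specAlg := by
  have := Subalgebra.sum_mem specAlg h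
  convert this using 1
  ext <;> simp [Prod.fst_sum, Prod.snd_sum]

lemma spec_prod {ι : Type*} (s : Finset ι) (x : ι → Kq) (c : ι → ℚ)
    (h : ∀ i ∈ s, (x i, c i) ∈ specAlg) : (∏ i ∈ s, x i, ∏ i ∈ s, c i) ∈ specAlg := by
  have := Subalgebra.prod_mem specAlg h
  convert this using 1
  ext <;> simp [Prod.fst_prod, Prod.snd_prod]

variable {n : Type*} [Fintype n] [DecidableEq n]

/-- The specialisations at `q = 1` of those matrices in `Φ` with entries regular at `q = 1`. -/
def specOf (Φ : Subalgebra Kq (Matrix n n Kq)) : Subalgebra ℚ (Matrix n n ℚ) where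
  carrier := {B | ∃ A ∈ Φ, ∀ i j, (A i j, B i j) ∈ specAlg}
  mul_mem' := by
    rintro B B' ⟨A, hA, h⟩ ⟨A', hA', h'⟩
    refine ⟨A * A', Φ.mul_mem hA hA', fun i j => ?_⟩
    simp only [Matrix.mul_apply]
    exact spec_sum _ _ _ fun k _ => specAlg.mul_mem (h i k) (h' k j)
  add_mem' := by
    rintro B B' ⟨A, hA, h⟩ ⟨A', hA', h'⟩
    exact ⟨A + A', Φ.add_mem hA hA', fun i j => specAlg.add_mem (h i j) (h' i j)⟩
  algebraMap_mem' c := by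
    refine ⟨algebraMap Kq _ (algebraMap ℚ Kq c), Φ.algebraMap_mem _, fun i j => ?_⟩
    simp only [Matrix.algebraMap_matrix_apply]
    split_ifs
    · exact specAlg.algebraMap_mem c
    · exact spec_zero

/-- Elements of `specOf Φ` lift to polynomial matrices in `Φ`: a common denominator equal to `1`
at `q = 1` can be cleared without changing the specialisation. -/
lemma exists_poly_of_mem_specOf {Φ : Subalgebra Kq (Matrix n n Kq)} {B : Matrix n n ℚ}
    (hB : B ∈ specOf Φ) : ∃ Q : Matrix n n ℚ[X], Q.map (algebraMap ℚ[X] Kq) ∈ Φ ∧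
      Q.map (eval 1) = B := by
  obtain ⟨A, hA, h⟩ := hB
  choose p d hd hp h using h
  have hp : ∀ i j, (p i j).eval 1 = B i j := hp
  have h : ∀ i j, A i j * algebraMap ℚ[X] Kq (d i j) = algebraMap ℚ[X] Kq (p i j) := h
  let D : n × n → ℚ[X] := fun x => d x.1 x.2
  have key : ∀ i j, A i j * algebraMap ℚ[X] Kq (∏ x, D x) =
      algebraMap ℚ[X] Kq (p i j * ∏ x ∈ Finset.univ.erase (i, j), D x) := by
    intro i j
    rw [← Finset.mul_prod_erase _ _ (Finset.mem_univ (i, j)), map_mul, map_mul, ← h]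
    ring
  refine ⟨Matrix.of fun i j => p i j * ∏ x ∈ Finset.univ.erase (i, j), D x, ?_, ?_⟩
  · have : (Matrix.of fun i j => p i j * ∏ x ∈ Finset.univ.erase (i, j), D x).map
        (algebraMap ℚ[X] Kq) = (algebraMap ℚ[X] Kq (∏ x, D x)) • A := by
      ext i j
      rw [Matrix.map_apply, Matrix.of_apply, ← key, Matrix.smul_apply, smul_eq_mul, mul_comm]
    rw [this]
    exact Φ.smul_mem hA _
  · ext i j
    simp [eval_prod, D, hd, hp]

/-- Let `Φ ⊆ Ω` be algebras of matrices over `ℚ(q)` such that every polynomial matrix in `Ω`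
specialises at `q = 1` to the specialisation of an element of `Φ`. Then `Ω = Φ`.
This is Nakayama's lemma, applied to the lattices of polynomial matrices in `Φ` and `Ω` and to the
ideal `(q - 1)`. -/
lemma le_of_spec_le {Φ Ω : Subalgebra Kq (Matrix n n Kq)} (hle : Φ ≤ Ω)
    (h : ∀ P : Matrix n n ℚ[X], P.map (algebraMap ℚ[X] Kq) ∈ Ω →
      P.map (eval 1) ∈ specOf Φ) : Ω ≤ Φ := by
  -- `lat Ψ` is the `ℚ[q]`-lattice of polynomial matrices in `Ψ`.
  let lat : Subalgebra Kq (Matrix n n Kq) → Submodule ℚ[X] (Matrix n n ℚ[X]) := fun Ψ =>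
    { carrier := {P | P.map (algebraMap ℚ[X] Kq) ∈ Ψ}
      add_mem' := by
        intro P Q hP hQ
        simp only [Set.mem_ofPred_eq] at *
        rw [Matrix.map_add _ (map_add _)]
        exact Ψ.add_mem hP hQ
      zero_mem' := by
        simp only [Set.mem_ofPred_eq]
        rw [Matrix.map_zero _ (map_zero _)]
        exact Ψ.zero_mem
      smul_mem' := by
        intro c P hP
        simp only [Set.mem_ofPred_eq] at *
        have : (c • P).map (algebraMap ℚ[X] Kq) =
            algebraMap ℚ[X] Kq c • P.map (algebraMap ℚ[X] Kq) := by
          ext i j; simp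
        rw [this]
        exact Ψ.smul_mem hP _ }
  have hsup : lat Ω ≤ lat Φ ⊔ (Ideal.span {(X - 1 : ℚ[X])}) • lat Ω := by
    intro P hP
    obtain ⟨Q, hQ, hQP⟩ := exists_poly_of_mem_specOf (h P hP)
    have hdvd : ∀ i j, (X - 1 : ℚ[X]) ∣ P i j - Q i j := by
      intro i j
      have h1 := congrFun (congrFun hQP i) j
      simp only [Matrix.map_apply] at h1
      have : (X - C 1 : ℚ[X]) ∣ P i j - Q i j := by
        rw [dvd_iff_isRoot, IsRoot.def, eval_sub, h1, sub_self]
      rwa [C_1] at this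
    choose W hW using hdvd
    have hPQ : P - Q = (X - 1 : ℚ[X]) • Matrix.of W := by
      ext1 i j
      simpa using hW i j
    have hne : algebraMap ℚ[X] Kq (X - 1) ≠ 0 := by
      have h0 : (X - 1 : ℚ[X]) ≠ 0 := by simpa using X_sub_C_ne_zero (1 : ℚ)
      simpa using (map_ne_zero_iff _ (IsFractionRing.injective ℚ[X] Kq)).2 h0
    have hWC : Matrix.of W ∈ lat Ω := by
      have h2 : P - Q ∈ lat Ω := (lat Ω).sub_mem hP (hle hQ)
      rw [hPQ] at h2
      change ((X - 1 : ℚ[X]) • Matrix.of W).map (algebraMap ℚ[X] Kq) ∈ Ω at h2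
      have h3 : (Matrix.of W).map (algebraMap ℚ[X] Kq) = (algebraMap ℚ[X] Kq (X - 1))⁻¹ •
          ((X - 1 : ℚ[X]) • Matrix.of W).map (algebraMap ℚ[X] Kq) := by
        ext i j
        simp only [Matrix.map_apply, Matrix.smul_apply, smul_eq_mul, map_mul]
        rw [inv_mul_cancel_left₀ hne]
      change (Matrix.of W).map (algebraMap ℚ[X] Kq) ∈ Ω
      rw [h3]
      exact Ω.smul_mem h2 _
    rw [show P = Q + (P - Q) by abel, hPQ]
    exact Submodule.add_mem_sup hQ
      (Submodule.smul_mem_smul (Ideal.mem_span_singleton_self _) hWC)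
  -- Nakayama: some `c` congruent to `1` modulo `q - 1`, hence nonzero, maps `lat Ω` into `lat Φ`.
  obtain ⟨c, hc, hcP⟩ := Submodule.exists_sub_one_mem_and_smul_le_of_fg_of_le_sup
    (IsNoetherian.noetherian (lat Ω)) le_rfl hsup
  have hc1 : c.eval 1 = 1 := by
    obtain ⟨u, hu⟩ := Ideal.mem_span_singleton.1 hc
    have := congrArg (eval 1) hu
    simp at this
    linarith
  have hc0 : algebraMap ℚ[X] Kq c ≠ 0 := by
    refine (map_ne_zero_iff _ (IsFractionRing.injective ℚ[X] Kq)).2 ?_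
    rintro rfl
    simp at hc1
  intro A hA
  obtain ⟨⟨b, hb⟩, hbA⟩ := IsLocalization.exist_integer_multiples_of_finite
    (nonZeroDivisors ℚ[X]) (fun x : n × n => A x.1 x.2)
  choose P hP using hbA
  have hb0 : algebraMap ℚ[X] Kq b ≠ 0 :=
    (map_ne_zero_iff _ (IsFractionRing.injective ℚ[X] Kq)).2 (nonZeroDivisors.ne_zero hb)
  have hmap : (Matrix.of fun i j => P (i, j)).map (algebraMap ℚ[X] Kq) =
      algebraMap ℚ[X] Kq b • A := by
    ext i j
    have := hP (i, j)
    simp only [Matrix.map_apply, Matrix.of_apply, Matrix.smul_apply, smul_eq_mul]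
    rw [this, Algebra.smul_def]
  have hmem : (Matrix.of fun i j => P (i, j)) ∈ lat Ω := by
    change (Matrix.of fun i j => P (i, j)).map (algebraMap ℚ[X] Kq) ∈ Ω
    rw [hmap]; exact Ω.smul_mem hA _
  have h4 : (c • Matrix.of fun i j => P (i, j)).map (algebraMap ℚ[X] Kq) ∈ Φ :=
    hcP (Submodule.smul_mem_pointwise_smul _ c _ hmem)
  have h5 : A = ((algebraMap ℚ[X] Kq c) * algebraMap ℚ[X] Kq b)⁻¹ •
      (c • Matrix.of fun i j => P (i, j)).map (algebraMap ℚ[X] Kq) := by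
    ext i j
    have := congrFun (congrFun hmap i) j
    simp only [Matrix.map_apply, Matrix.of_apply, Matrix.smul_apply, smul_eq_mul, map_mul] at *
    rw [this]
    field_simp
  rw [h5]
  exact Φ.smul_mem h4 _

end Spec

/-! ### The classical commutant at `q = 1` -/

section Classical

variable {r m : ℕ}

/-- The symmetrised matrix unit `E_{a,b} + E_{-a,-b}`. -/
def Fm (a b : Idx r) : Matrix (Idx r) (Idx r) ℚ :=
  Matrix.single a b 1 + Matrix.single a.rev b.rev 1

lemma Fm_rev (a b : Idx r) : Fm a.rev b.rev = Fm a b := by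
  simp [Fm, add_comm]

lemma Fm_mul (a b c d : Idx r) : Fm a b * Fm c d =
    (if b = c then Fm a d else 0) + (if b = c.rev then Fm a d.rev else 0) := by
  have h1 : (b.rev = c) ↔ (b = c.rev) := Fin.rev_eq_iff
  have h2 : (b.rev = c.rev) ↔ (b = c) := Fin.rev_inj
  have key : ∀ (a b c d : Idx r), (Matrix.single a b (1 : ℚ) * Matrix.single c d (1 : ℚ)) =
      if b = c then Matrix.single a d 1 else 0 := by
    intro a b c d
    split_ifs with h
    · subst h; simp
    · exact Matrix.single_mul_single_of_ne _ _ _ _ h _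
  simp only [Fm, add_mul, mul_add, key, h1, h2, Fin.rev_rev]
  split_ifs <;> abel

/-- `a` and `b` lie in the same block of the decomposition of the index set into `{-r-3/2}`,
`𝕀(2r+2)` and `{r+3/2}`. -/
def sameType (a b : Idx r) : Prop := (a = topI r ↔ b = topI r) ∧ (a = botI r ↔ b = botI r)

lemma rev_top : (topI r).rev = botI r := by
  ext; simp [topI, botI]

lemma rev_bot : (botI r).rev = topI r := by
  ext; simp [topI, botI]

lemma sum_Fm_diag : ∑ j : Idx r, Fm j j = (2 : ℚ) • (1 : Matrix (Idx r) (Idx r) ℚ) := by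
  simp only [Fm, Finset.sum_add_distrib]
  have h : ∑ j : Idx r, Matrix.single j j (1 : ℚ) = 1 := by
    ext a b
    simp [Matrix.sum_apply, Matrix.single_apply, Matrix.one_apply, ite_and]
  have h2 : ∑ j : Idx r, Matrix.single j.rev j.rev (1 : ℚ) = 1 := by
    rw [← h]
    exact Equiv.sum_comp Fin.revPerm (fun j => Matrix.single j j (1 : ℚ))
  rw [h, h2, two_smul]

lemma deriva_one {n R : Type*} [Fintype n] [DecidableEq n] [CommRing R] :
    deriva m (1 : Matrix n n R) = (m : R) • 1 := by
  have : ∀ j : Fin m, Function.update (1 : Fin m → Matrix n n R) j 1 = 1 := fun j =>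
    Function.update_eq_self j _
  simp [deriva, this, tens_one, Nat.cast_smul_eq_nsmul]

/-- The differences of the diagonal `deriva m (Fm a a)`, together with the identity, span all of
them: the sum of all `Fm a a` is `2`, and the characteristic is zero. -/
lemma deriva_diag_mem (S : Subalgebra ℚ (Matrix (Fin m → Idx r) (Fin m → Idx r) ℚ))
    (h2 : ∀ a b : Idx r, b.val = a.val + 1 → deriva m (Fm a a) - deriva m (Fm b b) ∈ S)
    (a : Idx r) : deriva m (Fm a a) ∈ S := by
  have hz : ∀ (k : ℕ) (hk : k < 2 * r + 4),
      deriva m (Fm (botI r) (botI r)) - deriva m (Fm ⟨k, hk⟩ ⟨k, hk⟩) ∈ S := by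
    intro k
    induction k with
    | zero => intro hk; simp [botI, S.zero_mem]
    | succ k ih =>
      intro hk
      have := S.add_mem (ih (by omega)) (h2 ⟨k, by omega⟩ ⟨k + 1, hk⟩ rfl)
      rwa [sub_add_sub_cancel] at this
  have hab : ∀ b : Idx r, deriva m (Fm a a) - deriva m (Fm b b) ∈ S := by
    intro b
    have := S.sub_mem (hz b.1 b.2) (hz a.1 a.2)
    rwa [sub_sub_sub_cancel_left] at this
  have hsum : ∑ b : Idx r, deriva m (Fm b b) ∈ S := by
    have : ∑ b : Idx r, deriva m (Fm b b) = derivaLin (Idx r) ℚ m (∑ b, Fm b b) := by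
      rw [map_sum]; rfl
    rw [this, sum_Fm_diag]
    change deriva m _ ∈ S
    rw [deriva_smul, deriva_one]
    exact S.smul_mem (S.smul_mem S.one_mem _) _
  have htot : ((2 * r + 4 : ℕ) : ℚ) • deriva m (Fm a a) ∈ S := by
    have := S.add_mem (S.sum_mem (t := Finset.univ) fun b _ => hab b) hsum
    rw [← Finset.sum_add_distrib] at this
    simpa [← Nat.cast_smul_eq_nsmul ℚ] using this
  have := S.smul_mem htot (((2 * r + 4 : ℕ) : ℚ)⁻¹)
  rwa [inv_smul_smul₀ (by positivity)] at this

/-- The Chevalley generators `Fm a (a+1)` and the Cartan part generate all `Fm a b` under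
commutators. For `a < b` and `c = b - 1` one has `[Fm a c, Fm c b] = Fm a b`, except that for
`b = -a` the extra term `-Fm (a+1) (b-1)` appears; both cases are covered by induction on
`b - a`. -/
lemma deriva_Fm_mem (S : Subalgebra ℚ (Matrix (Fin m → Idx r) (Fin m → Idx r) ℚ))
    (h1 : ∀ a b : Idx r, 0 < a.val → b.val = a.val + 1 → b.val < 2 * r + 3 →
      deriva m (Fm a b) ∈ S)
    (h2 : ∀ a b : Idx r, b.val = a.val + 1 → deriva m (Fm a a) - deriva m (Fm b b) ∈ S)
    (a b : Idx r) (hab : sameType a b) : deriva m (Fm a b) ∈ S := by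
  have hlt : ∀ (d : ℕ) (a b : Idx r), 0 < a.val → b.val = a.val + 1 + d → b.val < 2 * r + 3 →
      deriva m (Fm a b) ∈ S := by
    intro d
    induction d using Nat.strong_induction_on with
    | _ d ih =>
      intro a b ha hb hb'
      rcases Nat.eq_zero_or_pos d with rfl | hd
      · exact h1 a b ha (by omega) hb'
      · let c : Idx r := ⟨b.val - 1, by omega⟩
        have hac := ih (d - 1) (by omega) a c ha (by simp [c]; omega) (by simp [c]; omega)
        have hcb := h1 c b (by simp [c]; omega) (by simp [c]; omega) hb'
        have hcr : c ≠ c.rev := by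
          intro h
          have := congrArg Fin.val h
          simp only [Fin.val_rev] at this
          omega
        have hba : b ≠ a := by rintro rfl; omega
        have hcomm := deriva_comm (m := m) (Fm a c) (Fm c b)
        rw [Fm_mul, Fm_mul, if_pos rfl, if_neg hcr, if_neg hba, add_zero, zero_add] at hcomm
        have hmem := S.sub_mem (S.mul_mem hac hcb) (S.mul_mem hcb hac)
        rw [hcomm] at hmem
        split_ifs at hmem with hbr
        · have hv := congrArg Fin.val hbr
          simp only [Fin.val_rev] at hv
          have hc' : deriva m (Fm c c.rev) ∈ S := by
            rw [← Fm_rev, Fin.rev_rev]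
            refine ih (d - 2) (by omega) _ _ ?_ ?_ ?_ <;> simp [c, Fin.val_rev] <;> omega
          have := S.add_mem hmem hc'
          rwa [← deriva_add, sub_add_cancel] at this
        · simpa using hmem
  have ht : a.val = 2 * r + 3 ↔ b.val = 2 * r + 3 := by
    have := hab.1
    rw [Fin.ext_iff, Fin.ext_iff] at this
    exact this
  have hb : a.val = 0 ↔ b.val = 0 := by
    have := hab.2
    rw [Fin.ext_iff, Fin.ext_iff] at this
    exact this
  have ha' := a.2
  have hb' := b.2
  rcases lt_trichotomy a.val b.val with h | h | h
  · exact hlt (b.val - a.val - 1) a b (by omega) (by omega) (by omega)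
  · obtain rfl : a = b := Fin.ext h
    exact deriva_diag_mem S h2 a
  · rw [← Fm_rev]
    refine hlt (a.val - b.val - 1) _ _ ?_ ?_ ?_ <;> simp only [Fin.val_rev] <;> omega

/-- The algebra of matrices commuting with `η_j ↦ η_{-j}` and preserving the three blocks. -/
def blockSym (r : ℕ) : Set (Matrix (Idx r) (Idx r) ℚ) :=
  {x | (∀ a b, x a.rev b.rev = x a b) ∧ ∀ a b, x a b ≠ 0 → sameType a b}

lemma sameType.trans {a b c : Idx r} (h : sameType a b) (h' : sameType b c) : sameType a c :=
  ⟨h.1.trans h'.1, h.2.trans h'.2⟩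

lemma sameType.rev {a b : Idx r} (h : sameType a b) : sameType a.rev b.rev := by
  obtain ⟨h1, h2⟩ := h
  refine ⟨?_, ?_⟩
  · rw [Fin.rev_eq_iff, Fin.rev_eq_iff, rev_top]; exact h2
  · rw [Fin.rev_eq_iff, Fin.rev_eq_iff, rev_bot]; exact h1

lemma blockSym_mul : ∀ x ∈ blockSym r, ∀ y ∈ blockSym r, x * y ∈ blockSym r := by
  rintro x ⟨hx, hx'⟩ y ⟨hy, hy'⟩
  refine ⟨fun a b => ?_, fun a b h => ?_⟩
  · rw [Matrix.mul_apply, Matrix.mul_apply, ← Equiv.sum_comp Fin.revPerm]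
    simp [hx, hy]
  · rw [Matrix.mul_apply] at h
    obtain ⟨c, _, hc⟩ := Finset.exists_ne_zero_of_sum_ne_zero h
    exact (hx' _ _ (left_ne_zero_of_mul hc)).trans (hy' _ _ (right_ne_zero_of_mul hc))

lemma Fm_mem_blockSym {a b : Idx r} (h : sameType a b) : Fm a b ∈ blockSym r := by
  refine ⟨fun c d => ?_, fun c d hcd => ?_⟩
  · simp only [Fm, Matrix.add_apply, Matrix.single_apply, Fin.rev_inj]
    rw [add_comm]
    simp only [← Fin.rev_eq_iff]
  · simp only [Fm, Matrix.add_apply, Matrix.single_apply] at hcd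
    by_cases h1 : a = c ∧ b = d
    · rw [← h1.1, ← h1.2]; exact h
    · by_cases h2 : a.rev = c ∧ b.rev = d
      · rw [← h2.1, ← h2.2]; exact h.rev
      · simp [h1, h2] at hcd

lemma deriva_blockSym_mem (S : Subalgebra ℚ (Matrix (Fin m → Idx r) (Fin m → Idx r) ℚ))
    (hF : ∀ a b : Idx r, sameType a b → deriva m (Fm a b) ∈ S)
    (x : Matrix (Idx r) (Idx r) ℚ) (hx : x ∈ blockSym r) : deriva m x ∈ S := by
  have hsum : x = (1 / 2 : ℚ) • ∑ a, ∑ b, x a b • Fm a b := by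
    have h1 : ∑ a, ∑ b, x a b • Matrix.single a b (1 : ℚ) = x := by
      conv_rhs => rw [Matrix.matrix_eq_sum_single x]
      simp
    have h2 : ∑ a, ∑ b, x a b • Matrix.single a.rev b.rev (1 : ℚ) = x := by
      conv_rhs => rw [← h1]
      rw [← Equiv.sum_comp Fin.revPerm]
      refine Finset.sum_congr rfl fun a _ => ?_
      rw [← Equiv.sum_comp Fin.revPerm]
      simp [hx.1]
    simp only [Fm, smul_add, Finset.sum_add_distrib, h1, h2]
    rw [← smul_add, ← two_smul ℚ x, smul_smul]
    norm_num
  have : deriva m x = (1 / 2 : ℚ) • ∑ a, ∑ b, x a b • deriva m (Fm a b) := by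
    conv_lhs => rw [hsum]
    change derivaLin (Idx r) ℚ m _ = _
    simp only [map_smul, map_sum]
    rfl
  rw [this]
  refine S.smul_mem (S.sum_mem fun a _ => S.sum_mem fun b _ => ?_) _
  by_cases h : x a b = 0
  · simp [h, S.zero_mem]
  · exact S.smul_mem (hF a b (hx.2 a b h)) _

/-- Reverse the sign of the entries of `g` selected by `ε`. -/
def flipBy (ε : Fin m → Bool) (g : Fin m → Idx r) : Fin m → Idx r :=
  fun k => if ε k then (g k).rev else g k

lemma Fm_apply_eq_sum (a b c d : Idx r) : Fm a b c d =
    ∑ e : Bool, if a = (if e then c.rev else c) ∧ b = (if e then d.rev else d) then (1 : ℚ)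
      else 0 := by
  rw [Fintype.sum_bool, Fm, Matrix.add_apply, add_comm]
  simp [Matrix.single_apply, Fin.rev_eq_iff]

/-- A matrix invariant under the Weyl group of type `B` and preserving blocks is a linear combination of
symmetrised pure tensors in the `Fm a b`, hence lies in any algebra that contains the
`deriva m (Fm a b)`. -/
lemma mem_of_invariant (S : Subalgebra ℚ (Matrix (Fin m → Idx r) (Fin m → Idx r) ℚ))
    (hF : ∀ a b : Idx r, sameType a b → deriva m (Fm a b) ∈ S)
    (B : Matrix (Fin m → Idx r) (Fin m → Idx r) ℚ)
    (hperm : ∀ (σ : Equiv.Perm (Fin m)) g f, B (g ∘ σ) (f ∘ σ) = B g f)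
    (hflip : ∀ ε g f, B (flipBy ε g) (flipBy ε f) = B g f)
    (htype : ∀ g f, B g f ≠ 0 → ∀ k, sameType (g k) (f k)) : B ∈ S := by
  have hent : ∀ (g f g' f' : Fin m → Idx r) (σ : Equiv.Perm (Fin m)),
      tens ((fun k => Fm (g k) (f k)) ∘ σ) g' f' =
      ∑ ε : Fin m → Bool, if g = flipBy ε g' ∘ σ.symm ∧ f = flipBy ε f' ∘ σ.symm then (1 : ℚ)
        else 0 := by
    intro g f g' f' σ
    simp only [tens_apply, Function.comp_apply, Fm_apply_eq_sum]
    rw [Finset.prod_univ_sum, Fintype.piFinset_univ]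
    refine Finset.sum_congr rfl fun ε _ => ?_
    rw [Finset.prod_ite_zero]
    have : (∀ k ∈ Finset.univ, (g (σ k) = if ε k = true then (g' k).rev else g' k) ∧
        f (σ k) = if ε k = true then (f' k).rev else f' k) ↔
        g = flipBy ε g' ∘ σ.symm ∧ f = flipBy ε f' ∘ σ.symm := by
      rw [← Equiv.comp_symm_eq, ← Equiv.comp_symm_eq, Equiv.symm_symm, funext_iff, funext_iff,
        ← forall_and]
      simp [flipBy]
    simp only [this, Finset.prod_const_one]
  have hB : B = ((Fintype.card (Equiv.Perm (Fin m)) * Fintype.card (Fin m → Bool) : ℕ) : ℚ)⁻¹ •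
      ∑ g, ∑ f, B g f • ∑ σ : Equiv.Perm (Fin m), tens ((fun k => Fm (g k) (f k)) ∘ σ) := by
    rw [eq_inv_smul_iff₀ (by
      have := Fintype.card_pos (α := Equiv.Perm (Fin m))
      have := Fintype.card_pos (α := Fin m → Bool)
      positivity)]
    ext g' f'
    simp only [Matrix.sum_apply, Matrix.smul_apply, hent, smul_eq_mul, Finset.mul_sum]
    symm
    calc _ = ∑ σ : Equiv.Perm (Fin m), ∑ ε : Fin m → Bool, ∑ g, ∑ f, B g f *
          (if g = flipBy ε g' ∘ σ.symm ∧ f = flipBy ε f' ∘ σ.symm then (1 : ℚ) else 0) := by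
          simp_rw [Finset.sum_comm (s := (Finset.univ : Finset (Fin m → Idx r)))
            (t := (Finset.univ : Finset (Equiv.Perm (Fin m)))),
            Finset.sum_comm (s := (Finset.univ : Finset (Fin m → Idx r)))
            (t := (Finset.univ : Finset (Fin m → Bool)))]
      _ = ∑ σ : Equiv.Perm (Fin m), ∑ ε : Fin m → Bool, B g' f' := by
          refine Finset.sum_congr rfl fun σ _ => Finset.sum_congr rfl fun ε _ => ?_
          simp only [ite_and, mul_ite, mul_one, mul_zero]
          simp [hperm, hflip]
      _ = _ := by simp [mul_assoc]
  rw [hB]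
  refine S.smul_mem (S.sum_mem fun g _ => S.sum_mem fun f _ => ?_) _
  by_cases h : B g f = 0
  · simp [h, S.zero_mem]
  · refine S.smul_mem (sum_perm_mem S (blockSym r) blockSym_mul (deriva_blockSym_mem S hF) _ ?_) _
    exact fun i => Fm_mem_blockSym (htype g f h i)

end Classical

/-! ### Matrices of the generators, and their values at `q = 1` -/

section Generators

set_option linter.unusedSectionVars false

variable {r m : ℕ}

/-- The matrix of an operator on `V̄^⊗m` (an isomorphism of algebras) in the basis `M_f`. -/
abbrev mx (r m : ℕ) :
    Module.End Kq (TP r m) ≃ₐ[Kq] Matrix (Fin m → Idx r) (Fin m → Idx r) Kq :=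
  LinearMap.toMatrixAlgEquiv'

/-- The matrix of an operator on `V̄` in the basis `η_j`. -/
abbrev mx1 (r : ℕ) : Module.End Kq (Vb r) ≃ₐ[Kq] Matrix (Idx r) (Idx r) Kq :=
  LinearMap.toMatrixAlgEquiv'

lemma mx_apply (A : Module.End Kq (TP r m)) (g f : Fin m → Idx r) :
    mx r m A g f = A (Mf f) g := by
  simp [mx, LinearMap.toMatrixAlgEquiv'_apply, Mf]

lemma mx1_apply (A : Module.End Kq (Vb r)) (a b : Idx r) :
    mx1 r A a b = A (Pi.single b 1) a := by
  simp [mx1, LinearMap.toMatrixAlgEquiv'_apply]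

lemma mx_tensorOp (A : Fin m → Module.End Kq (Vb r)) :
    mx r m (tensorOp r m A) = tens fun k => mx1 r (A k) := by
  ext g f
  simp [tens_apply, tensorOp, matOp, Pi.single_apply]

/-- The eigenvalue of `κ_i` on `η_j`. -/
def kap {r : ℕ} (a : Fin (2*r+3)) (j : Idx r) : Kq :=
  if j = loI a then qv else if j = hiI a then qv⁻¹ else 1

/-- The eigenvalue of `κ_i⁻¹` on `η_j`. -/
def kapi {r : ℕ} (a : Fin (2*r+3)) (j : Idx r) : Kq :=
  if j = loI a then qv⁻¹ else if j = hiI a then qv else 1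

lemma mx1_opE (a : Fin (2*r+3)) : mx1 r (opE r a) = Matrix.single (loI a) (hiI a) 1 := by
  ext b c
  rw [mx1_apply]
  by_cases h : b = loI a <;>
    simp [opE, diagMove, Matrix.single_apply, Pi.single_apply, h, eq_comm]

lemma mx1_opF (a : Fin (2*r+3)) : mx1 r (opF r a) = Matrix.single (hiI a) (loI a) 1 := by
  ext b c
  rw [mx1_apply]
  by_cases h : b = hiI a <;>
    simp [opF, diagMove, Matrix.single_apply, Pi.single_apply, h, eq_comm]

lemma mx1_opK (a : Fin (2*r+3)) : mx1 r (opK r a) = Matrix.diagonal (kap a) := by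
  ext b c
  rw [mx1_apply]
  simp [opK, diagMove, Matrix.diagonal_apply, Pi.single_apply, kap]
  split_ifs <;> rfl

lemma mx1_opKinv (a : Fin (2*r+3)) : mx1 r (opKinv r a) = Matrix.diagonal (kapi a) := by
  ext b c
  rw [mx1_apply]
  simp [opKinv, diagMove, Matrix.diagonal_apply, Pi.single_apply, kapi]
  split_ifs <;> rfl

/-- The factor in position `k` of the `j`-th summand of the matrix of `𝔼_i`. -/
def eFac (a : Fin (2*r+3)) (j : Fin m) (k : Fin m) : Matrix (Idx r) (Idx r) Kq :=
  if k < j then 1 else if k = j then Matrix.single (loI a) (hiI a) 1 else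
    Matrix.diagonal (kapi a)

/-- The factor in position `k` of the `j`-th summand of the matrix of `𝔽_i`. -/
def fFac (a : Fin (2*r+3)) (j : Fin m) (k : Fin m) : Matrix (Idx r) (Idx r) Kq :=
  if k < j then Matrix.diagonal (kap a) else if k = j then Matrix.single (hiI a) (loI a) 1 else 1

lemma mx_opEE (a : Fin (2*r+3)) : mx r m (opEE r m a) = ∑ j, tens (eFac a j) := by
  simp only [opEE, map_sum, mx_tensorOp]
  refine Finset.sum_congr rfl fun j _ => congrArg _ (funext fun k => ?_)
  simp only [eFac, Fin.lt_def]
  split_ifs <;> simp only [map_one, mx1_opE, mx1_opKinv]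

lemma mx_opFF (a : Fin (2*r+3)) : mx r m (opFF r m a) = ∑ j, tens (fFac a j) := by
  simp only [opFF, map_sum, mx_tensorOp]
  refine Finset.sum_congr rfl fun j _ => congrArg _ (funext fun k => ?_)
  simp only [fFac, Fin.lt_def]
  split_ifs <;> simp only [map_one, mx1_opF, mx1_opK]

lemma mx_opKK (a : Fin (2*r+3)) :
    mx r m (opKK r m a) = tens fun _ => Matrix.diagonal (kap a) := by
  simp only [opKK, mx_tensorOp, mx1_opK]

lemma mx_opKKinv (a : Fin (2*r+3)) :
    mx r m (opKKinv r m a) = tens fun _ => Matrix.diagonal (kapi a) := by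
  simp only [opKKinv, mx_tensorOp, mx1_opKinv]

lemma rev_loI (a : Fin (2*r+3)) : (loI a).rev = hiI a.rev := by
  have := a.2
  ext; simp [loI, hiI, Fin.val_rev]; omega

lemma rev_hiI (a : Fin (2*r+3)) : (hiI a).rev = loI a.rev := by
  have := a.2
  ext; simp [loI, hiI, Fin.val_rev]

lemma rev_midI : (midI r).rev = midI r := by
  ext; simp [midI, Fin.val_rev]; omega

lemma loI_ne_hiI (a : Fin (2*r+3)) : loI a ≠ hiI a := by
  simp [loI, hiI, Fin.ext_iff]

/-- The entries of `A` are regular at `q = 1`, with values the entries of `B`. -/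
def SpecM {n : Type*} (A : Matrix n n Kq) (B : Matrix n n ℚ) : Prop :=
  ∀ i j, (A i j, B i j) ∈ specAlg

section

variable {n : Type*} [Fintype n] [DecidableEq n] {A A' : Matrix n n Kq} {B B' : Matrix n n ℚ}

lemma SpecM.add (h : SpecM A B) (h' : SpecM A' B') : SpecM (A + A') (B + B') :=
  fun i j => specAlg.add_mem (h i j) (h' i j)

lemma SpecM.mul (h : SpecM A B) (h' : SpecM A' B') : SpecM (A * A') (B * B') := fun i j => by
  simp only [Matrix.mul_apply]
  exact spec_sum _ _ _ fun k _ => specAlg.mul_mem (h i k) (h' k j)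

lemma SpecM.sum {ι : Type*} (s : Finset ι) {A : ι → Matrix n n Kq} {B : ι → Matrix n n ℚ}
    (h : ∀ i ∈ s, SpecM (A i) (B i)) : SpecM (∑ i ∈ s, A i) (∑ i ∈ s, B i) := fun i j => by
  simp only [Matrix.sum_apply]
  exact spec_sum _ _ _ fun k hk => h k hk i j

lemma SpecM.tens {A : Fin m → Matrix n n Kq} {B : Fin m → Matrix n n ℚ}
    (h : ∀ k, SpecM (A k) (B k)) : SpecM (tens A) (tens B) := fun g f => by
  simp only [tens_apply]
  exact spec_prod _ _ _ fun k _ => h k _ _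

lemma SpecM.one : SpecM (1 : Matrix n n Kq) 1 := fun i j => by
  simp only [Matrix.one_apply]
  split_ifs
  exacts [spec_one, spec_zero]

lemma SpecM.single (i j : n) : SpecM (Matrix.single i j 1) (Matrix.single i j 1) := fun a b => by
  simp only [Matrix.single_apply]
  split_ifs
  exacts [spec_one, spec_zero]

lemma SpecM.diagonal {d : n → Kq} (h : ∀ i, (d i, 1) ∈ specAlg) :
    SpecM (Matrix.diagonal d) 1 := fun i j => by
  simp only [Matrix.one_apply, Matrix.diagonal_apply]
  split_ifs
  exacts [h i, spec_zero]

end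

lemma spec_kap (a : Fin (2*r+3)) (j : Idx r) : (kap a j, 1) ∈ specAlg := by
  unfold kap
  split_ifs
  exacts [spec_qv, spec_qv_inv, spec_one]

lemma spec_kapi (a : Fin (2*r+3)) (j : Idx r) : (kapi a j, 1) ∈ specAlg := by
  unfold kapi
  split_ifs
  exacts [spec_qv_inv, spec_qv, spec_one]

lemma spec_opEE (a : Fin (2*r+3)) :
    SpecM (mx r m (opEE r m a)) (deriva m (Matrix.single (loI a) (hiI a) 1)) := by
  rw [mx_opEE]
  refine SpecM.sum _ fun j _ => SpecM.tens fun k => ?_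
  unfold eFac
  rcases lt_trichotomy k j with h | rfl | h
  · simpa [h, h.ne] using SpecM.one
  · simpa using SpecM.single _ _
  · simpa [h.not_gt, h.ne'] using SpecM.diagonal (spec_kapi a)

lemma spec_opFF (a : Fin (2*r+3)) :
    SpecM (mx r m (opFF r m a)) (deriva m (Matrix.single (hiI a) (loI a) 1)) := by
  rw [mx_opFF]
  refine SpecM.sum _ fun j _ => SpecM.tens fun k => ?_
  unfold fFac
  rcases lt_trichotomy k j with h | rfl | h
  · simpa [h, h.ne] using SpecM.diagonal (spec_kap a)
  · simpa using SpecM.single _ _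
  · simpa [h.not_gt, h.ne'] using SpecM.one

lemma spec_opKKinv (a : Fin (2*r+3)) : SpecM (mx r m (opKKinv r m a)) 1 := by
  rw [mx_opKKinv, ← tens_one]
  exact SpecM.tens fun k => SpecM.diagonal (spec_kapi a)

/-- The matrices of the operators in `Φ(L_q^ı)`. -/
def phiMat (r m : ℕ) : Subalgebra Kq (Matrix (Fin m → Idx r) (Fin m → Idx r) Kq) :=
  (PhiL r m).map (mx r m).toAlgHom

lemma mem_phiMat {A : Module.End Kq (TP r m)} (h : A ∈ LeviSet r m) : mx r m A ∈ phiMat r m :=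
  ⟨A, Algebra.subset_adjoin h, rfl⟩

lemma spec_opB (a : Fin (2*r+3)) :
    SpecM (mx r m (opB r m a)) (deriva m (Fm (loI a) (hiI a))) := by
  rw [opB, map_add, map_mul, Fm, deriva_add, rev_loI, rev_hiI]
  have := (spec_opEE (m := m) a).add ((spec_opFF (m := m) a.rev).mul (spec_opKKinv a))
  rwa [mul_one] at this

/-- The term `𝕂_0⁻¹` of `ℬ_0` specialises to the identity. -/
lemma spec_opB0 :
    SpecM (mx r m (opB0 r m)) (deriva m (Fm (loI (midI r)) (hiI (midI r))) + 1) := by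
  rw [opB0, map_add, map_add, map_smul, map_mul, Fm, deriva_add, rev_loI, rev_hiI, rev_midI]
  refine ((spec_opEE _).add ?_).add (spec_opKKinv _)
  have := (spec_opFF (m := m) (midI r)).mul (spec_opKKinv (midI r))
  rw [mul_one] at this
  intro i j
  have h2 := specAlg.mul_mem spec_qv (this i j)
  simpa using h2

/-- The classical root vectors in the Levi part of `𝔤𝔩^ι` come from `ℬ_i`. -/
lemma deriva_Fm_mem_specOf (a b : Idx r) (ha : 0 < a.val) (hab : b.val = a.val + 1)
    (hb : b.val < 2 * r + 3) : deriva m (Fm a b) ∈ specOf (phiMat r m) := by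
  let c : Fin (2*r+3) := ⟨a.val, by omega⟩
  have hlo : loI c = a := rfl
  have hhi : hiI c = b := Fin.ext hab.symm
  by_cases hc : c = midI r
  · have h : deriva m (Fm a b) + 1 ∈ specOf (phiMat r m) := by
      rw [← hlo, ← hhi, hc]
      exact ⟨_, mem_phiMat (Or.inl (Or.inl (Or.inl rfl))), spec_opB0⟩
    simpa using sub_mem h (one_mem _)
  · rw [← hlo, ← hhi]
    refine ⟨_, mem_phiMat (Or.inl (Or.inl (Or.inr ⟨c, ⟨hc, ?_, ?_⟩, rfl⟩))), spec_opB c⟩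
    · exact ha
    · change a.val < _; omega

/-- `x = 1 + (q - 1) y` where `y` is regular at `q = 1` with value `c`; that is, `c` is the
derivative of `x` at `q = 1`. -/
def LogSpec (x : Kq) (c : ℚ) : Prop := ∃ y, x = 1 + (qv - 1) * y ∧ (y, c) ∈ specAlg

lemma LogSpec.one : LogSpec 1 0 := ⟨0, by simp, spec_zero⟩

lemma LogSpec.of_qv : LogSpec qv 1 := ⟨1, by simp, spec_one⟩

lemma LogSpec.of_qv_inv : LogSpec qv⁻¹ (-1) :=
  ⟨-qv⁻¹, by have := qv_ne_zero; field_simp; ring, specAlg.neg_mem spec_qv_inv⟩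

lemma LogSpec.mul {x x' : Kq} {c c' : ℚ} (h : LogSpec x c) (h' : LogSpec x' c') :
    LogSpec (x * x') (c + c') := by
  obtain ⟨y, rfl, hy⟩ := h
  obtain ⟨y', rfl, hy'⟩ := h'
  refine ⟨y + y' + (qv - 1) * (y * y'), by ring, ?_⟩
  have h1 : ((qv - 1, 0) : Kq × ℚ) ∈ specAlg := by
    simpa using specAlg.sub_mem spec_qv spec_one
  have := specAlg.add_mem (specAlg.add_mem hy hy') (specAlg.mul_mem h1 (specAlg.mul_mem hy hy'))
  simpa using this

lemma LogSpec.prod {ι : Type*} (s : Finset ι) {x : ι → Kq} {c : ι → ℚ}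
    (h : ∀ i ∈ s, LogSpec (x i) (c i)) : LogSpec (∏ i ∈ s, x i) (∑ i ∈ s, c i) := by
  classical
  induction s using Finset.induction_on with
  | empty => simpa using LogSpec.one
  | insert i s hi ih =>
    rw [Finset.prod_insert hi, Finset.sum_insert hi]
    exact (h i (Finset.mem_insert_self _ _)).mul
      (ih fun j hj => h j (Finset.mem_insert_of_mem hj))

lemma tens_diagonal {n R : Type*} [Fintype n] [DecidableEq n] [CommRing R] (d : Fin m → n → R) :
    tens (fun k => Matrix.diagonal (d k)) = Matrix.diagonal fun f => ∏ k, d k (f k) := by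
  ext g f
  simp only [tens_apply, Matrix.diagonal_apply, Finset.prod_ite_zero, funext_iff]
  simp

lemma deriva_diagonal {n R : Type*} [Fintype n] [DecidableEq n] [CommRing R] (d : n → R) :
    deriva m (Matrix.diagonal d) = Matrix.diagonal fun f => ∑ k, d (f k) := by
  have h : ∀ j : Fin m, Function.update (1 : Fin m → Matrix n n R) j (Matrix.diagonal d) =
      fun k => Matrix.diagonal (if k = j then d else 1) := by
    intro j
    funext k
    by_cases hk : k = j
    · subst hk; simp
    · simp [hk]
  simp only [deriva, h, tens_diagonal]
  ext g f
  simp only [Matrix.sum_apply, Matrix.diagonal_apply]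
  by_cases hgf : g = f
  · simp only [hgf, if_true]
    refine Finset.sum_congr rfl fun j _ => ?_
    rw [Finset.prod_eq_single j] <;> simp +contextual
  · simp [hgf]

/-- The classical Cartan elements come from `(𝕜_i - 1) / (q - 1)`. -/
lemma deriva_cartan_mem_specOf (a b : Idx r) (hab : b.val = a.val + 1) :
    deriva m (Fm a a) - deriva m (Fm b b) ∈ specOf (phiMat r m) := by
  have hb := b.2
  let c : Fin (2*r+3) := ⟨a.val, by omega⟩
  have hlo : loI c = a := rfl
  have hhi : hiI c = b := Fin.ext hab.symm
  let w : Idx r → ℚ := fun j => (if j = a then 1 else if j = b then -1 else 0) +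
    (if j = b.rev then -1 else if j = a.rev then 1 else 0)
  have hne : a ≠ b := by rintro rfl; omega
  have hw : Fm a a - Fm b b = Matrix.diagonal w := by
    have hne' : a.rev ≠ b.rev := fun h => hne (Fin.rev_injective h)
    ext i j
    by_cases hij : i = j
    · subst hij
      have e : ∀ x, (x = i) = (i = x) := fun x => propext eq_comm
      simp only [Fm, Matrix.sub_apply, Matrix.add_apply, Matrix.single_apply, and_self,
        Matrix.diagonal_apply_eq, w, e a, e b, e a.rev, e b.rev]
      have h1 : i = a → i ≠ b := fun h h' => hne (h.symm.trans h')
      have h2 : i = a.rev → i ≠ b.rev := fun h h' => hne' (h.symm.trans h')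
      split_ifs <;> first
        | exact absurd ‹i = b› (h1 ‹i = a›)
        | exact absurd ‹i = b.rev› (h2 ‹i = a.rev›)
        | norm_num
    · have : ∀ x, ¬ (x = i ∧ x = j) := fun x h => hij (h.1.symm.trans h.2)
      simp [Fm, this, hij]
  have hlog : ∀ j, LogSpec (kap c j * kapi c.rev j) (w j) := by
    intro j
    refine LogSpec.mul ?_ ?_
    · simp only [kap, hlo, hhi]
      split_ifs
      exacts [LogSpec.of_qv, LogSpec.of_qv_inv, LogSpec.one]
    · simp only [kapi, ← rev_hiI, ← rev_loI, hlo, hhi]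
      split_ifs
      exacts [LogSpec.of_qv_inv, LogSpec.of_qv, LogSpec.one]
  have hkk : mx r m (opkk r m c) =
      Matrix.diagonal fun f => ∏ k, (kap c (f k) * kapi c.rev (f k)) := by
    rw [opkk, map_mul, mx_opKK, mx_opKKinv, tens_diagonal, tens_diagonal,
      Matrix.diagonal_mul_diagonal]
    simp only [Finset.prod_mul_distrib]
  have hsub : deriva m (Fm a a) - deriva m (Fm b b) = Matrix.diagonal fun f => ∑ k, w (f k) := by
    rw [← deriva_diagonal, ← hw]
    exact ((derivaLin (Idx r) ℚ m).map_sub _ _).symm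
  have hq : qv - 1 ≠ 0 := by
    have h0 : (Polynomial.X - 1 : Polynomial ℚ) ≠ 0 := by
      simpa using Polynomial.X_sub_C_ne_zero (1 : ℚ)
    have h1 := (map_ne_zero_iff _ (RatFunc.algebraMap_injective ℚ)).2 h0
    simpa [qv] using h1
  refine ⟨(qv - 1)⁻¹ • (mx r m (opkk r m c) - 1), ?_, ?_⟩
  · exact Subalgebra.smul_mem _ (sub_mem (mem_phiMat (Or.inl (Or.inr ⟨c, rfl⟩))) (one_mem _)) _
  · intro g f
    rw [hsub, hkk, Matrix.smul_apply, Matrix.sub_apply, Matrix.one_apply, Matrix.diagonal_apply,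
      Matrix.diagonal_apply]
    by_cases hgf : g = f
    · obtain ⟨y, hy, hy'⟩ := LogSpec.prod Finset.univ fun k _ => hlog (g k)
      rw [if_pos hgf, if_pos hgf, if_pos hgf, hy]
      simpa [hq] using hy'
    · simpa [hgf] using spec_zero

end Generators

/-! ### Commutation of the generators with the Hecke operators -/

section Commutation

set_option linter.unusedSectionVars false

variable {r m : ℕ}

/-- The matrix `A` commutes with the Hecke generator exchanging positions `p` and `q`, written
out on entries. -/
def SwapInv (p q : Fin m) (A : Matrix (Fin m → Idx r) (Fin m → Idx r) Kq) : Prop :=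
  ∀ g f, (if g p = g q then qv⁻¹ * A g f else A (g ∘ Equiv.swap p q) f +
      (if g q < g p then (qv⁻¹ - qv) * A g f else 0)) =
    (if f p = f q then qv⁻¹ * A g f else A g (f ∘ Equiv.swap p q) +
      (if f q < f p then (qv⁻¹ - qv) * A g f else 0))

/-- The matrix `A` commutes with the Hecke generator acting by sign change in position `z`,
written out on entries. -/
def FlipInv (z : Fin m) (A : Matrix (Fin m → Idx r) (Fin m → Idx r) Kq) : Prop :=
  ∀ g f, A (Function.update g z (g z).rev) f +
      (if g z < (g z).rev then (qv⁻¹ - qv) * A g f else 0) =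
    A g (Function.update f z (f z).rev) +
      (if f z < (f z).rev then (qv⁻¹ - qv) * A g f else 0)

lemma commute_iff_mx (R A : Module.End Kq (TP r m)) :
    Commute R A ↔ ∀ g f, R (A (Mf f)) g = A (R (Mf f)) g := by
  rw [commute_iff_eq, ← (mx r m).injective.eq_iff]
  constructor
  · intro h g f
    have := congrFun (congrFun h g) f
    rwa [mx_apply, mx_apply] at this
  · intro h
    ext g f
    rw [mx_apply, mx_apply]
    exact h g f

lemma Rsw_apply {p : ℕ} (h : p + 1 < m) (v : TP r m) (g : Fin m → Idx r) :
    Rsw r m p v g = if g ⟨p, by omega⟩ = g ⟨p+1, h⟩ then qv⁻¹ * v g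
        else v (g ∘ Equiv.swap ⟨p, by omega⟩ ⟨p+1, h⟩) +
          (if g ⟨p+1, h⟩ < g ⟨p, by omega⟩ then (qv⁻¹ - qv) * v g else 0) := by
  rw [Rsw, dif_pos h]
  rfl

lemma comp_swap_eq_iff (p q : Fin m) (g f : Fin m → Idx r) :
    g ∘ Equiv.swap p q = f ↔ g = f ∘ Equiv.swap p q := by
  constructor
  · rintro rfl; funext k; simp
  · rintro rfl; funext k; simp

lemma Rsw_Mf {p : ℕ} (h : p + 1 < m) (f : Fin m → Idx r) :
    Rsw r m p (Mf f) = if f ⟨p, by omega⟩ = f ⟨p+1, h⟩ then qv⁻¹ • Mf f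
        else Mf (f ∘ Equiv.swap ⟨p, by omega⟩ ⟨p+1, h⟩) +
          (if f ⟨p+1, h⟩ < f ⟨p, by omega⟩ then (qv⁻¹ - qv) • Mf f else 0) := by
  funext g
  rw [Rsw_apply h]
  simp only [Mf, Pi.single_apply, comp_swap_eq_iff]
  by_cases hgf : g = f
  · subst hgf
    simp only [if_true]
    split_ifs <;> simp [Pi.single_apply] <;> assumption
  · by_cases hgf' : g = f ∘ Equiv.swap ⟨p, by omega⟩ ⟨p+1, h⟩
    · have h1 : g ⟨p, by omega⟩ = f ⟨p+1, h⟩ := by simp [hgf']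
      have h2 : g ⟨p+1, h⟩ = f ⟨p, by omega⟩ := by simp [hgf']
      have hne : f ⟨p, by omega⟩ ≠ f ⟨p+1, h⟩ := by
        intro he
        apply hgf
        rw [hgf']
        funext k
        simp only [Function.comp_apply, Equiv.swap_apply_def]
        split_ifs with hk hk'
        · rw [hk, he]
        · rw [hk', he]
        · rfl
      rw [if_neg (by rw [h1, h2]; exact hne.symm), if_neg hne]
      split_ifs <;> simp [Pi.single_apply, hgf']
      all_goals
        rw [← hgf']
        exact fun h => absurd h hgf
    · split_ifs <;> simp [hgf', hgf]

lemma commute_Rsw_iff {p : ℕ} (h : p + 1 < m) (A : Module.End Kq (TP r m)) :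
    Commute (Rsw r m p) A ↔ SwapInv ⟨p, by omega⟩ ⟨p+1, h⟩ (mx r m A) := by
  rw [commute_iff_mx]
  refine forall_congr' fun g => forall_congr' fun f => ?_
  rw [Rsw_apply h, Rsw_Mf h]
  simp only [mx_apply]
  refine Eq.congr rfl ?_
  split_ifs <;> simp

lemma R0op_apply (h : 0 < m) (v : TP r m) (g : Fin m → Idx r) :
    R0op r m v g = v (Function.update g ⟨0, h⟩ (g ⟨0, h⟩).rev) +
      (if g ⟨0, h⟩ < (g ⟨0, h⟩).rev then (qv⁻¹ - qv) * v g else 0) := by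
  rw [R0op, dif_pos h]
  rfl

lemma R0op_Mf (h : 0 < m) (f : Fin m → Idx r) :
    R0op r m (Mf f) = Mf (Function.update f ⟨0, h⟩ (f ⟨0, h⟩).rev) +
      (if f ⟨0, h⟩ < (f ⟨0, h⟩).rev then (qv⁻¹ - qv) • Mf f else 0) := by
  funext g
  have hiff : ∀ g f : Fin m → Idx r, Function.update g ⟨0, h⟩ (g ⟨0, h⟩).rev = f →
      g = Function.update f ⟨0, h⟩ (f ⟨0, h⟩).rev := by
    rintro g f rfl
    simp
  have hiff' : Function.update g ⟨0, h⟩ (g ⟨0, h⟩).rev = f ↔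
      g = Function.update f ⟨0, h⟩ (f ⟨0, h⟩).rev :=
    ⟨hiff g f, fun h => (hiff f g h.symm).symm⟩
  rw [R0op_apply h, Pi.add_apply]
  simp only [Mf, Pi.single_apply, hiff']
  congr 1
  by_cases hgf : g = f
  · subst hgf
    rw [if_pos rfl]
    split_ifs <;> simp
  · split_ifs <;> simp [hgf]

lemma commute_R0op_iff (h : 0 < m) (A : Module.End Kq (TP r m)) :
    Commute (R0op r m) A ↔ FlipInv ⟨0, h⟩ (mx r m A) := by
  rw [commute_iff_mx]
  refine forall_congr' fun g => forall_congr' fun f => ?_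
  rw [R0op_apply h, R0op_Mf h]
  simp only [mx_apply]
  refine Eq.congr rfl ?_
  split_ifs <;> simp

lemma SwapInv.sum {ι : Type*} {p q : Fin m} (s : Finset ι)
    {A : ι → Matrix (Fin m → Idx r) (Fin m → Idx r) Kq} (h : ∀ i ∈ s, SwapInv p q (A i)) :
    SwapInv p q (∑ i ∈ s, A i) := by
  intro g f
  have h' := Finset.sum_congr rfl fun i hi => h i hi g f
  simp only [Matrix.sum_apply, Finset.mul_sum]
  split_ifs at h' ⊢ <;> first | rfl | simpa [Finset.sum_add_distrib] using h'

lemma SwapInv.add {p q : Fin m} {A B : Matrix (Fin m → Idx r) (Fin m → Idx r) Kq}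
    (hA : SwapInv p q A) (hB : SwapInv p q B) : SwapInv p q (A + B) := by
  intro g f
  have h := congrArg₂ (· + ·) (hA g f) (hB g f)
  simp only [Matrix.add_apply]
  split_ifs at h ⊢ <;> linear_combination h

lemma FlipInv.sum {ι : Type*} {z : Fin m} (s : Finset ι)
    {A : ι → Matrix (Fin m → Idx r) (Fin m → Idx r) Kq} (h : ∀ i ∈ s, FlipInv z (A i)) :
    FlipInv z (∑ i ∈ s, A i) := by
  intro g f
  have h' := Finset.sum_congr rfl fun i hi => h i hi g f
  simp only [Matrix.sum_apply, Finset.mul_sum]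
  split_ifs at h' ⊢ <;> simpa [Finset.sum_add_distrib] using h'

lemma FlipInv.add {z : Fin m} {A B : Matrix (Fin m → Idx r) (Fin m → Idx r) Kq}
    (hA : FlipInv z A) (hB : FlipInv z B) : FlipInv z (A + B) := by
  intro g f
  have h := congrArg₂ (· + ·) (hA g f) (hB g f)
  simp only [Matrix.add_apply]
  split_ifs at h ⊢ <;> linear_combination h

/-- The case of two tensor factors of `SwapInv`: `T a b c d` stands for the entry of an operator
on `V̄ ⊗ V̄` at `(η_a ⊗ η_b, η_c ⊗ η_d)`. -/
def TwoSite (T : Idx r → Idx r → Idx r → Idx r → Kq) : Prop :=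
  ∀ a b c d, (if a = b then qv⁻¹ * T a b c d else T b a c d +
      (if b < a then (qv⁻¹ - qv) * T a b c d else 0)) =
    (if c = d then qv⁻¹ * T a b c d else T a b d c +
      (if d < c then (qv⁻¹ - qv) * T a b c d else 0))

lemma SwapInv.of_twoSite {p q : Fin m}
    {A : Matrix (Fin m → Idx r) (Fin m → Idx r) Kq}
    (T : Idx r → Idx r → Idx r → Idx r → Kq) (x : Fin m → Matrix (Idx r) (Idx r) Kq)
    (hA : ∀ g f, A g f = T (g p) (g q) (f p) (f q) *
      ∏ k ∈ (Finset.univ.erase p).erase q, x k (g k) (f k))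
    (hT : TwoSite T) : SwapInv p q A := by
  intro g f
  have h1 : ∀ k ∈ (Finset.univ.erase p).erase q, Equiv.swap p q k = k := by
    intro k hk
    simp only [Finset.mem_erase, Finset.mem_univ, and_true] at hk
    exact Equiv.swap_apply_of_ne_of_ne hk.2 hk.1
  have hc1 : ∏ k ∈ (Finset.univ.erase p).erase q, x k ((g ∘ Equiv.swap p q) k) (f k) =
      ∏ k ∈ (Finset.univ.erase p).erase q, x k (g k) (f k) :=
    Finset.prod_congr rfl fun k hk => by rw [Function.comp_apply, h1 k hk]
  have hc2 : ∏ k ∈ (Finset.univ.erase p).erase q, x k (g k) ((f ∘ Equiv.swap p q) k) =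
      ∏ k ∈ (Finset.univ.erase p).erase q, x k (g k) (f k) :=
    Finset.prod_congr rfl fun k hk => by rw [Function.comp_apply, h1 k hk]
  simp only [hA, hc1, hc2]
  have h := hT (g p) (g q) (f p) (f q)
  simp only [Function.comp_apply, Equiv.swap_apply_left, Equiv.swap_apply_right]
  generalize ∏ k ∈ (Finset.univ.erase p).erase q, x k (g k) (f k) = c
  split_ifs at h ⊢ <;> linear_combination c * h

lemma tens_two_sites {p q : Fin m} (hpq : p ≠ q) (x : Fin m → Matrix (Idx r) (Idx r) Kq)
    (g f : Fin m → Idx r) : tens x g f = x p (g p) (f p) * x q (g q) (f q) *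
      ∏ k ∈ (Finset.univ.erase p).erase q, x k (g k) (f k) := by
  rw [tens_apply, ← Finset.mul_prod_erase _ _ (Finset.mem_univ p),
    ← Finset.mul_prod_erase _ _ (Finset.mem_erase.2 ⟨hpq.symm, Finset.mem_univ q⟩), mul_assoc]

lemma twoSite_diagonal (d : Idx r → Kq) :
    TwoSite fun a b c e => Matrix.diagonal d a c * Matrix.diagonal d b e := by
  intro a b c e
  dsimp only
  by_cases h1 : a = c ∧ b = e
  · obtain ⟨rfl, rfl⟩ := h1
    by_cases hab : a = b
    · simp [hab]
    · simp [hab, Ne.symm hab]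
  · have h0 : Matrix.diagonal d a c * Matrix.diagonal d b e = 0 := by
      rw [mul_eq_zero]
      by_contra h
      rw [not_or] at h
      refine h1 ⟨?_, ?_⟩ <;> by_contra hne
      exacts [h.1 (Matrix.diagonal_apply_ne _ hne), h.2 (Matrix.diagonal_apply_ne _ hne)]
    simp only [h0, mul_zero, ite_self, add_zero]
    by_cases h2 : a = e ∧ b = c
    · obtain ⟨rfl, rfl⟩ := h2
      by_cases hab : a = b
      · simp [hab]
      · simp [hab, Ne.symm hab, mul_comm]
    · have h3 : ¬ (b = c ∧ a = e) := fun h => h2 h.symm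
      simp only [Matrix.diagonal_apply, mul_ite, ite_mul, zero_mul, mul_zero, ← ite_and, h2, h3]
      simp

lemma SwapInv.of_diagonal {p q : Fin m} (hpq : p ≠ q) (x : Fin m → Matrix (Idx r) (Idx r) Kq)
    (d : Idx r → Kq) (hp : x p = Matrix.diagonal d) (hq : x q = Matrix.diagonal d) :
    SwapInv p q (tens x) :=
  SwapInv.of_twoSite (fun a b c e => Matrix.diagonal d a c * Matrix.diagonal d b e) x
    (fun g f => by rw [tens_two_sites hpq, hp, hq]) (twoSite_diagonal d)

end Commutation

/-! ### Commutation with `H_i` for `i ≥ 1` -/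

section Forward

set_option linter.unusedSectionVars false
set_option linter.unusedSimpArgs false

variable {r m : ℕ}

/-- The operator `e_i ⊗ κ_i⁻¹ + 1 ⊗ e_i` on `V̄ ⊗ V̄`, with `w` the eigenvalues of `κ_i⁻¹`, commutes
with the Hecke generator. It is what adjacent positions `p, p + 1` see of the two summands of `𝔼_i`
with `e_i` in one of these positions. -/
lemma twoSite_E (lo hi : Idx r) (h : hi.val = lo.val + 1) (w : Idx r → Kq) (hlo : w lo = qv⁻¹)
    (hhi : w hi = qv) (hw : ∀ x, x ≠ lo → x ≠ hi → w x = 1) :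
    TwoSite fun a b c d => (if a = lo ∧ c = hi ∧ b = d then w b else 0) +
      (if a = c ∧ b = lo ∧ d = hi then 1 else 0) := by
  intro a b c d
  have hq := qv_ne_zero
  have hne : lo ≠ hi := by rintro rfl; omega
  have hlt : lo < hi := by rw [Fin.lt_def]; omega
  have key : ∀ x : Idx r, x = lo ∨ x = hi ∨
      (x ≠ lo ∧ x ≠ hi ∧ w x = 1 ∧ x < lo ∧ x < hi) ∨
      (x ≠ lo ∧ x ≠ hi ∧ w x = 1 ∧ lo < x ∧ hi < x) := by
    intro x
    by_cases h1 : x = lo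
    · exact Or.inl h1
    by_cases h2 : x = hi
    · exact Or.inr (Or.inl h2)
    have h3 := hw x h1 h2
    have h1' : x.val ≠ lo.val := fun h => h1 (Fin.ext h)
    have h2' : x.val ≠ hi.val := fun h => h2 (Fin.ext h)
    have h4 : (x < lo ∧ x < hi) ∨ (lo < x ∧ hi < x) := by
      simp only [Fin.lt_def]
      omega
    tauto
  -- every entry in the relation vanishes unless `{a, b} = {lo, x}` and `{c, d} = {hi, x}`
  by_cases h0 : (a = lo ∧ c = hi ∧ b = d) ∨ (a = lo ∧ d = hi ∧ b = c) ∨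
      (b = lo ∧ c = hi ∧ a = d) ∨ (b = lo ∧ d = hi ∧ a = c)
  · rcases h0 with ⟨rfl, rfl, rfl⟩ | ⟨rfl, rfl, rfl⟩ | ⟨rfl, rfl, rfl⟩ | ⟨rfl, rfl, rfl⟩
    · rcases key b with rfl | rfl | ⟨h1, h2, h3, h4, h5⟩ | ⟨h1, h2, h3, h4, h5⟩
      · simp [hne, hne.symm, hlt, hlt.not_gt, hlo]
        field_simp
        ring
      · simp [hne, hne.symm, hlt, hlt.not_gt, hhi, hq]
      all_goals simp [h1, h2, h1.symm, h2.symm, h3, h4, h5, h4.not_gt, h5.not_gt]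
    · rcases key b with rfl | rfl | ⟨h1, h2, h3, h4, h5⟩ | ⟨h1, h2, h3, h4, h5⟩
      · simp [hne, hne.symm, hlt, hlt.not_gt, hlo]
      · simp [hne, hne.symm, hlt, hlt.not_gt, hhi, hq]
      all_goals simp [h1, h2, h1.symm, h2.symm, h3, h4, h5, h4.not_gt, h5.not_gt]
    · rcases key a with rfl | rfl | ⟨h1, h2, h3, h4, h5⟩ | ⟨h1, h2, h3, h4, h5⟩
      · simp [hne, hne.symm, hlt, hlt.not_gt, hlo]
        field_simp
        ring
      · simp [hne, hne.symm, hlt, hlt.not_gt, hhi, hq]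
      all_goals simp [h1, h2, h1.symm, h2.symm, h3, h4, h5, h4.not_gt, h5.not_gt]
    · rcases key a with rfl | rfl | ⟨h1, h2, h3, h4, h5⟩ | ⟨h1, h2, h3, h4, h5⟩
      · simp [hne, hne.symm, hlt, hlt.not_gt, hlo]
      · simp [hne, hne.symm, hlt, hlt.not_gt, hhi, hq]
      all_goals simp [h1, h2, h1.symm, h2.symm, h3, h4, h5, h4.not_gt, h5.not_gt]
  · simp only [not_or] at h0
    obtain ⟨n1, n2, n3, n4⟩ := h0
    have n4' : ¬ (a = c ∧ b = lo ∧ d = hi) := fun h => n4 ⟨h.2.1, h.2.2, h.1⟩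
    have n3' : ¬ (b = lo ∧ c = hi ∧ a = d) := n3
    have n2' : ¬ (b = c ∧ a = lo ∧ d = hi) := fun h => n2 ⟨h.2.1, h.2.2, h.1⟩
    have n2'' : ¬ (a = lo ∧ d = hi ∧ b = c) := n2
    have n3'' : ¬ (a = d ∧ b = lo ∧ c = hi) := fun h => n3 ⟨h.2.1, h.2.2, h.1⟩
    simp only [n1, n2', n2'', n3', n3'', n4', if_false]
    simp

/-- `TwoSite` is preserved by reversing both the order of the index set and the order of the factors. -/
lemma TwoSite.rev {T : Idx r → Idx r → Idx r → Idx r → Kq} (h : TwoSite T) :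
    TwoSite fun a b c d => T b.rev a.rev d.rev c.rev := by
  intro a b c d
  have := h b.rev a.rev d.rev c.rev
  simpa only [Fin.rev_inj, Fin.rev_lt_rev, eq_comm (a := b) (b := a),
    eq_comm (a := d) (b := c)] using this

/-- The operator `f_i ⊗ 1 + κ_i ⊗ f_i`, with `w` the eigenvalues of `κ_i`, commutes with the Hecke
generator: reversing all orders turns it into the corresponding operator for `𝔼_{-i}`. -/
lemma twoSite_F (lo hi : Idx r) (h : hi.val = lo.val + 1) (w : Idx r → Kq) (hlo : w lo = qv)
    (hhi : w hi = qv⁻¹) (hw : ∀ x, x ≠ lo → x ≠ hi → w x = 1) :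
    TwoSite fun a b c d => (if a = hi ∧ c = lo ∧ b = d then 1 else 0) +
      (if a = c ∧ b = hi ∧ d = lo then w a else 0) := by
  have h1 : lo.rev.val = hi.rev.val + 1 := by
    have := hi.2
    simp only [Fin.val_rev]
    omega
  have := (twoSite_E hi.rev lo.rev h1 (fun x => w x.rev) (by simpa using hhi) (by simpa using hlo)
    (fun x h1 h2 => hw _ (fun h => h2 (Fin.rev_eq_iff.1 h)) fun h => h1 (Fin.rev_eq_iff.1 h))).rev
  convert this using 5 with a b c d
  rw [add_comm]
  simp only [Fin.rev_inj, Fin.rev_rev]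
  congr 1
  · refine if_congr ?_ rfl rfl
    tauto
  · refine if_congr ?_ rfl rfl
    tauto

lemma kap_lo (a : Fin (2*r+3)) : kap a (loI a) = qv := by simp [kap]

lemma kap_hi (a : Fin (2*r+3)) : kap a (hiI a) = qv⁻¹ := by simp [kap, (loI_ne_hiI a).symm]

lemma kapi_lo (a : Fin (2*r+3)) : kapi a (loI a) = qv⁻¹ := by simp [kapi]

lemma kapi_hi (a : Fin (2*r+3)) : kapi a (hiI a) = qv := by simp [kapi, (loI_ne_hiI a).symm]

lemma swapInv_opEE (a : Fin (2*r+3)) {p q : Fin m} (hpq : q.val = p.val + 1) :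
    SwapInv p q (mx r m (opEE r m a)) := by
  have hne : p ≠ q := by rintro rfl; omega
  have hlt : p < q := by rw [Fin.lt_def]; omega
  rw [mx_opEE, ← Finset.add_sum_erase _ _ (Finset.mem_univ p),
    ← Finset.add_sum_erase _ _ (Finset.mem_erase.2 ⟨hne.symm, Finset.mem_univ q⟩), ← add_assoc]
  refine SwapInv.add ?_ (SwapInv.sum _ fun j hj => ?_)
  · refine SwapInv.of_twoSite _ (eFac a p) ?_ (twoSite_E (loI a) (hiI a) rfl (kapi a) (kapi_lo a)
      (kapi_hi a) fun x h1 h2 => by simp [kapi, h1, h2])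
    intro g f
    have hrest : ∏ k ∈ (Finset.univ.erase p).erase q, eFac a q k (g k) (f k) =
        ∏ k ∈ (Finset.univ.erase p).erase q, eFac a p k (g k) (f k) := by
      refine Finset.prod_congr rfl fun k hk => ?_
      simp only [Finset.mem_erase, Finset.mem_univ, and_true] at hk
      have h1 : k.val ≠ p.val := fun h => hk.2 (Fin.ext h)
      have h2 : (k < q) = (k < p) := by
        have : k.val ≠ q.val := fun h => hk.1 (Fin.ext h)
        simp only [Fin.lt_def, eq_iff_iff]
        omega
      simp only [eFac, hk.1, hk.2, h2]
    rw [Matrix.add_apply, tens_two_sites hne, tens_two_sites hne, hrest, ← add_mul]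
    congr 1
    have e1 : eFac a p p = Matrix.single (loI a) (hiI a) 1 := by simp [eFac]
    have e2 : eFac a p q = Matrix.diagonal (kapi a) := by simp [eFac, hlt.not_gt, hne.symm]
    have e3 : eFac a q p = 1 := by simp [eFac, hlt]
    have e4 : eFac a q q = Matrix.single (loI a) (hiI a) 1 := by simp [eFac]
    rw [e1, e2, e3, e4]
    simp only [Matrix.single_apply, Matrix.diagonal_apply, Matrix.one_apply, ite_mul, one_mul,
      zero_mul, mul_ite, mul_one, mul_zero, ← ite_and, eq_comm (a := loI a), eq_comm (a := hiI a),
      and_assoc]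
    congr 1 <;> exact if_congr (by tauto) rfl rfl
  · simp only [Finset.mem_erase, Finset.mem_univ, and_true] at hj
    have h1 : j.val ≠ p.val := fun h => hj.2 (Fin.ext h)
    have h2 : j.val ≠ q.val := fun h => hj.1 (Fin.ext h)
    by_cases h : p < j
    · have h' : q < j := by
        simp only [Fin.lt_def] at h ⊢
        omega
      refine SwapInv.of_diagonal hne _ 1 ?_ ?_
      · simp [eFac, h]
      · simp [eFac, h']
    · have h' : ¬ q < j := by
        simp only [Fin.lt_def] at h ⊢
        omega
      refine SwapInv.of_diagonal hne _ (kapi a) ?_ ?_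
      · simp [eFac, h, Ne.symm hj.2]
      · simp [eFac, h', Ne.symm hj.1]

lemma swapInv_opFF (a : Fin (2*r+3)) {p q : Fin m} (hpq : q.val = p.val + 1) :
    SwapInv p q (mx r m (opFF r m a)) := by
  have hne : p ≠ q := by rintro rfl; omega
  have hlt : p < q := by rw [Fin.lt_def]; omega
  rw [mx_opFF, ← Finset.add_sum_erase _ _ (Finset.mem_univ p),
    ← Finset.add_sum_erase _ _ (Finset.mem_erase.2 ⟨hne.symm, Finset.mem_univ q⟩), ← add_assoc]
  refine SwapInv.add ?_ (SwapInv.sum _ fun j hj => ?_)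
  · refine SwapInv.of_twoSite _ (fFac a p) ?_ (twoSite_F (loI a) (hiI a) rfl (kap a) (kap_lo a)
      (kap_hi a) fun x h1 h2 => by simp [kap, h1, h2])
    intro g f
    have hrest : ∏ k ∈ (Finset.univ.erase p).erase q, fFac a q k (g k) (f k) =
        ∏ k ∈ (Finset.univ.erase p).erase q, fFac a p k (g k) (f k) := by
      refine Finset.prod_congr rfl fun k hk => ?_
      simp only [Finset.mem_erase, Finset.mem_univ, and_true] at hk
      have h1 : k.val ≠ p.val := fun h => hk.2 (Fin.ext h)
      have h2 : (k < q) = (k < p) := by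
        have : k.val ≠ q.val := fun h => hk.1 (Fin.ext h)
        simp only [Fin.lt_def, eq_iff_iff]
        omega
      simp only [fFac, hk.1, hk.2, h2]
    rw [Matrix.add_apply, tens_two_sites hne, tens_two_sites hne, hrest, ← add_mul]
    congr 1
    have e1 : fFac a p p = Matrix.single (hiI a) (loI a) 1 := by simp [fFac]
    have e2 : fFac a p q = 1 := by simp [fFac, hlt.not_gt, hne.symm]
    have e3 : fFac a q p = Matrix.diagonal (kap a) := by simp [fFac, hlt]
    have e4 : fFac a q q = Matrix.single (hiI a) (loI a) 1 := by simp [fFac]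
    rw [e1, e2, e3, e4]
    simp only [Matrix.single_apply, Matrix.diagonal_apply, Matrix.one_apply, ite_mul, one_mul,
      zero_mul, mul_ite, mul_one, mul_zero, ← ite_and, eq_comm (a := loI a), eq_comm (a := hiI a),
      and_assoc]
    congr 1 <;> exact if_congr (by tauto) rfl rfl
  · simp only [Finset.mem_erase, Finset.mem_univ, and_true] at hj
    have h1 : j.val ≠ p.val := fun h => hj.2 (Fin.ext h)
    have h2 : j.val ≠ q.val := fun h => hj.1 (Fin.ext h)
    by_cases h : p < j
    · have h' : q < j := by
        simp only [Fin.lt_def] at h ⊢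
        omega
      refine SwapInv.of_diagonal hne _ (kap a) ?_ ?_
      · simp [fFac, h]
      · simp [fFac, h']
    · have h' : ¬ q < j := by
        simp only [Fin.lt_def] at h ⊢
        omega
      refine SwapInv.of_diagonal hne _ 1 ?_ ?_
      · simp [fFac, h, Ne.symm hj.2]
      · simp [fFac, h', Ne.symm hj.1]

lemma commute_Rsw_opEE (p : ℕ) (a : Fin (2*r+3)) : Commute (Rsw r m p) (opEE r m a) := by
  by_cases h : p + 1 < m
  · exact (commute_Rsw_iff h _).2 (swapInv_opEE a rfl)
  · rw [Rsw, dif_neg h]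
    exact Commute.one_left _

lemma commute_Rsw_opFF (p : ℕ) (a : Fin (2*r+3)) : Commute (Rsw r m p) (opFF r m a) := by
  by_cases h : p + 1 < m
  · exact (commute_Rsw_iff h _).2 (swapInv_opFF a rfl)
  · rw [Rsw, dif_neg h]
    exact Commute.one_left _

lemma commute_Rsw_opKK (p : ℕ) (a : Fin (2*r+3)) : Commute (Rsw r m p) (opKK r m a) := by
  by_cases h : p + 1 < m
  · refine (commute_Rsw_iff h _).2 ?_
    rw [mx_opKK]
    exact SwapInv.of_diagonal (by simp [Fin.ext_iff]) _ (kap a) rfl rfl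
  · rw [Rsw, dif_neg h]
    exact Commute.one_left _

lemma commute_Rsw_opKKinv (p : ℕ) (a : Fin (2*r+3)) : Commute (Rsw r m p) (opKKinv r m a) := by
  by_cases h : p + 1 < m
  · refine (commute_Rsw_iff h _).2 ?_
    rw [mx_opKKinv]
    exact SwapInv.of_diagonal (by simp [Fin.ext_iff]) _ (kapi a) rfl rfl
  · rw [Rsw, dif_neg h]
    exact Commute.one_left _

lemma commute_Rsw_of_mem (p : ℕ) {A : Module.End Kq (TP r m)} (hA : A ∈ LeviSet r m) :
    Commute (Rsw r m p) A := by
  rcases hA with ((rfl | ⟨a, -, rfl⟩) | ⟨a, rfl⟩) | ⟨a, rfl⟩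
  · rw [opB0]
    refine Commute.add_right (Commute.add_right (commute_Rsw_opEE p _) ?_)
      (commute_Rsw_opKKinv p _)
    have h : Commute (Rsw r m p) (opFF r m (midI r) * opKKinv r m (midI r)) :=
      (commute_Rsw_opFF p _).mul_right (commute_Rsw_opKKinv p _)
    rw [Commute, SemiconjBy] at h ⊢
    rw [mul_smul_comm, smul_mul_assoc, h]
  · rw [opB]
    exact (commute_Rsw_opEE p _).add_right ((commute_Rsw_opFF p _).mul_right
      (commute_Rsw_opKKinv p _))
  · rw [opkk]
    exact (commute_Rsw_opKK p _).mul_right (commute_Rsw_opKKinv p _)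
  · rw [opkkInv]
    exact (commute_Rsw_opKK p _).mul_right (commute_Rsw_opKKinv p _)

/-- The case of one tensor factor of `FlipInv`: `y` commutes with the Hecke generator `H_0` acting on
`V̄`. -/
def OneSite (y : Matrix (Idx r) (Idx r) Kq) : Prop :=
  ∀ a c, y a.rev c + (if a < a.rev then (qv⁻¹ - qv) * y a c else 0) =
    y a c.rev + (if c < c.rev then (qv⁻¹ - qv) * y a c else 0)

lemma FlipInv.of_oneSite {z : Fin m} (x : Fin m → Matrix (Idx r) (Idx r) Kq)
    (y : Matrix (Idx r) (Idx r) Kq) (hy : OneSite y) :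
    FlipInv z (tens (Function.update x z y)) := by
  intro g f
  have hc1 : ∏ k ∈ Finset.univ.erase z, x k (Function.update g z (g z).rev k) (f k) =
      ∏ k ∈ Finset.univ.erase z, x k (g k) (f k) :=
    Finset.prod_congr rfl fun k hk => by
      rw [Function.update_of_ne (Finset.ne_of_mem_erase hk)]
  have hc2 : ∏ k ∈ Finset.univ.erase z, x k (g k) (Function.update f z (f z).rev k) =
      ∏ k ∈ Finset.univ.erase z, x k (g k) (f k) :=
    Finset.prod_congr rfl fun k hk => by
      rw [Function.update_of_ne (Finset.ne_of_mem_erase hk)]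
  simp only [tens_update_apply, hc1, hc2, Function.update_self]
  have h := hy (g z) (f z)
  generalize ∏ k ∈ Finset.univ.erase z, x k (g k) (f k) = c
  split_ifs at h ⊢ <;> linear_combination c * h

lemma OneSite.diagonal {d : Idx r → Kq} (hd : ∀ j, d j.rev = d j) :
    OneSite (Matrix.diagonal d) := by
  intro a c
  simp only [Matrix.diagonal_apply, Fin.rev_eq_iff, hd]
  by_cases h : a = c
  · subst h; rfl
  · simp [h]

lemma FlipInv.of_diagonal {z : Fin m} (x : Fin m → Matrix (Idx r) (Idx r) Kq) {d : Idx r → Kq}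
    (hd : ∀ j, d j.rev = d j) (hx : x z = Matrix.diagonal d) : FlipInv z (tens x) := by
  have := FlipInv.of_oneSite (z := z) x _ (OneSite.diagonal hd)
  rwa [← hx, Function.update_eq_self] at this

lemma kap_rev (a : Fin (2*r+3)) (j : Idx r) : kap a.rev j.rev = kapi a j := by
  have hne := loI_ne_hiI a
  simp only [kap, kapi, ← rev_loI, ← rev_hiI, Fin.rev_inj]
  by_cases h1 : j = loI a
  · simp [h1, hne]
  · simp [h1]

lemma kapi_rev (a : Fin (2*r+3)) (j : Idx r) : kapi a.rev j.rev = kap a j := by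
  have := kap_rev a.rev j.rev
  rw [Fin.rev_rev, Fin.rev_rev] at this
  exact this.symm

lemma kap_mul_kapi_rev (a : Fin (2*r+3)) (j : Idx r) :
    kap a.rev j.rev * kapi a j.rev = kap a.rev j * kapi a j := by
  have h := kapi_rev a.rev j
  rw [Fin.rev_rev] at h
  rw [kap_rev, h, mul_comm]

end Forward

/-! ### Commutation with `H_0` -/

section Flip

set_option linter.unusedSectionVars false

variable {r m : ℕ}

lemma FlipInv.smul {z : Fin m} {A : Matrix (Fin m → Idx r) (Fin m → Idx r) Kq} (c : Kq)
    (hA : FlipInv z A) : FlipInv z (c • A) := by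
  intro g f
  have h := hA g f
  simp only [Matrix.smul_apply, smul_eq_mul]
  split_ifs at h ⊢ <;> linear_combination c * h

/-- It suffices that `y` commutes with `η_j ↦ η_{-j}` and preserves the spans of the `η_j` with `j`
positive and with `j` negative. -/
lemma OneSite.of_symm {y : Matrix (Idx r) (Idx r) Kq} (h1 : ∀ b c, y b.rev c = y b c.rev)
    (h2 : ∀ b c, y b c ≠ 0 → (b < b.rev ↔ c < c.rev)) : OneSite y := by
  intro b c
  rw [h1]
  by_cases h : y b c = 0
  · simp [h]
  · simp only [h2 b c h]

/-- The matrix of `𝔼_i + c 𝔽_{-i} 𝕂_i⁻¹`. -/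
lemma mx_EF (a : Fin (2*r+3)) (c : Kq) :
    mx r m (opEE r m a + c • (opFF r m a.rev * opKKinv r m a)) =
      ∑ j, (tens (eFac a j) +
        c • tens fun k => fFac a.rev j k * Matrix.diagonal (kapi a)) := by
  rw [map_add, map_smul, map_mul, mx_opEE, mx_opFF, mx_opKKinv, Finset.sum_mul, Finset.smul_sum,
    ← Finset.sum_add_distrib]
  simp only [tens_mul]
  rfl

/-- The summands of `𝔼_i + c 𝔽_{-i} 𝕂_i⁻¹` with `e_i` and `f_{-i}` in a position `j` to the right of
`z` act in position `z` by `1` and `κ_{-i} κ_i⁻¹`, which are diagonal and invariant under the sign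
change. -/
lemma flipInv_off {z j : Fin m} (hz : z < j) (a : Fin (2*r+3)) (c : Kq) :
    FlipInv z (tens (eFac a j) +
        c • tens fun k => fFac a.rev j k * Matrix.diagonal (kapi a)) := by
  refine FlipInv.add ?_ (FlipInv.smul c ?_)
  · refine FlipInv.of_diagonal (d := fun _ => 1) _ (fun _ => rfl) ?_
    simp [eFac, hz]
  · refine FlipInv.of_diagonal (d := fun j => kap a.rev j * kapi a j) _
      (fun j => kap_mul_kapi_rev a j) ?_
    simp [fFac, hz]

/-- The summand of `𝔼_i + c 𝔽_{-i} 𝕂_i⁻¹` with `e_i` and `f_{-i}` in the first position `z` is the pure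
tensor `(e_i + c f_{-i} κ_i⁻¹) ⊗ κ_i⁻¹ ⊗ ⋯ ⊗ κ_i⁻¹`. -/
lemma summand_zero {z : Fin m} (hz : ∀ k, z ≤ k) (a : Fin (2*r+3)) (c : Kq) :
    tens (eFac a z) + c • tens (fun k => fFac a.rev z k * Matrix.diagonal (kapi a)) =
      tens (Function.update (fun _ : Fin m => Matrix.diagonal (kapi a)) z
        (Matrix.single (loI a) (hiI a) 1 +
          c • (Matrix.single (loI a).rev (hiI a).rev 1 * Matrix.diagonal (kapi a)))) := by
  rw [tens_update_add, tens_update_smul]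
  congr 2
  · ext k : 1
    by_cases h : k = z
    · subst h; simp [eFac]
    · simp [eFac, h, not_lt.2 (hz k)]
  · congr 1
    ext k : 1
    by_cases h : k = z
    · subst h; simp [fFac, rev_loI, rev_hiI]
    · simp [fFac, h, not_lt.2 (hz k)]

lemma kapi_rev_hiI {a : Fin (2*r+3)} (ha : a ≠ midI r) : kapi a (hiI a).rev = 1 := by
  have h := a.2
  have ha' : (a : ℕ) ≠ r + 1 := fun h => ha (Fin.ext h)
  have h1 : (hiI a).rev ≠ loI a := by
    simp only [ne_eq, Fin.ext_iff, Fin.val_rev, hiI, loI]; omega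
  have h2 : (hiI a).rev ≠ hiI a := by
    simp only [ne_eq, Fin.ext_iff, Fin.val_rev, hiI]; omega
  simp [kapi, h1, h2]

/-- For `i ≠ 0` one has `f_{-i} κ_i⁻¹ = f_{-i}`, and `e_i + f_{-i}` commutes with the sign change and
preserves the signs of indices. -/
lemma oneSite_of_ne {a : Fin (2*r+3)} (ha : a ≠ midI r) :
    OneSite (Matrix.single (loI a) (hiI a) 1 +
      (1 : Kq) • (Matrix.single (loI a).rev (hiI a).rev 1 * Matrix.diagonal (kapi a))) := by
  have ha' : (a : ℕ) ≠ r + 1 := fun h => ha (Fin.ext h)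
  have h := a.2
  have hy : (Matrix.single (loI a) (hiI a) 1 +
      (1 : Kq) • (Matrix.single (loI a).rev (hiI a).rev 1 * Matrix.diagonal (kapi a))) =
      Matrix.single (loI a) (hiI a) 1 + Matrix.single (loI a).rev (hiI a).rev 1 := by
    rw [one_smul]
    congr 1
    ext b c
    rw [Matrix.mul_diagonal, Matrix.single_apply]
    split_ifs with hbc
    · rw [← hbc.2, kapi_rev_hiI ha, one_mul]
    · rw [zero_mul]
  rw [hy]
  refine OneSite.of_symm (fun b c => ?_) fun b c hbc => ?_
  · simp only [Matrix.add_apply, Matrix.single_apply, Fin.rev_inj]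
    have hrev : ∀ x y : Idx r, x = y.rev ↔ x.rev = y := fun x y => Fin.rev_eq_iff.symm
    simp only [hrev, add_comm]
  · simp only [Matrix.add_apply, Matrix.single_apply] at hbc
    by_cases h1 : loI a = b ∧ hiI a = c
    · obtain ⟨rfl, rfl⟩ := h1
      simp only [Fin.lt_def, Fin.val_rev, hiI, loI]; omega
    · by_cases h2 : (loI a).rev = b ∧ (hiI a).rev = c
      · obtain ⟨rfl, rfl⟩ := h2
        simp only [Fin.lt_def, Fin.val_rev, hiI, loI]; omega
      · simp [h1, h2] at hbc

/-- For `i = 0` the operator `e_0 + q f_0 κ_0⁻¹` alone does not commute with `H_0`; adding `κ_0⁻¹`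
(the first factor of the term `𝕂_0⁻¹` of `ℬ_0`) makes it commute. -/
lemma oneSite_mid :
    OneSite (Matrix.single (loI (midI r)) (hiI (midI r)) 1 +
      qv • (Matrix.single (loI (midI r)).rev (hiI (midI r)).rev 1 *
        Matrix.diagonal (kapi (midI r))) + Matrix.diagonal (kapi (midI r))) := by
  have hr1 : (loI (midI r)).rev = hiI (midI r) := by rw [rev_loI, rev_midI]
  have hr2 : (hiI (midI r)).rev = loI (midI r) := by rw [rev_hiI, rev_midI]
  have hlt : loI (midI r) < hiI (midI r) := by simp [loI, hiI, Fin.lt_def]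
  have hne := hlt.ne
  have hq := qv_ne_zero
  rw [hr1, hr2]
  set lo := loI (midI r) with hlo
  set hi := hiI (midI r) with hhi
  have hk1 : kapi (midI r) lo = qv⁻¹ := by simp [kapi, hlo]
  have hk2 : kapi (midI r) hi = qv := by simp [kapi, ← hlo, ← hhi, hne.symm]
  have hk3 : ∀ j, j ≠ lo → j ≠ hi → kapi (midI r) j = 1 := fun j h1 h2 => by
    simp [kapi, ← hlo, ← hhi, h1, h2]
  have hr3 : ∀ j, j ≠ lo → j ≠ hi → j.rev ≠ lo ∧ j.rev ≠ hi := fun j h1 h2 =>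
    ⟨fun h => h2 (by rw [← hr1, ← h, Fin.rev_rev]), fun h => h1 (by rw [← hr2, ← h, Fin.rev_rev])⟩
  intro b c
  simp only [Matrix.add_apply, Matrix.smul_apply, Matrix.mul_diagonal, Matrix.single_apply,
    Matrix.diagonal_apply, smul_eq_mul]
  by_cases hb1 : b = lo
  · subst hb1
    by_cases hc1 : c = lo
    · subst hc1
      simp [hr1, hlt, hne, hne.symm, hk1, hk2, hq]
    · by_cases hc2 : c = hi
      · subst hc2
        simp [hr1, hr2, hlt, hlt.le, hne, hne.symm, hk1, hk2]
      · have := hr3 c hc1 hc2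
        simp [hr1, hlt, hne, hne.symm, Ne.symm hc1, Ne.symm hc2, Ne.symm this.1, Ne.symm this.2]
  · by_cases hb2 : b = hi
    · subst hb2
      by_cases hc1 : c = lo
      · subst hc1
        simp [hr1, hr2, hlt, hlt.le, hne, hne.symm, hk1, hk2, hq]
      · by_cases hc2 : c = hi
        · subst hc2
          simp [hr2, hne, hne.symm, hk1, hk2, hq]
        · have := hr3 c hc1 hc2
          simp [hr2, hne, hne.symm, Ne.symm hc1, Ne.symm hc2, Ne.symm this.1,
            Ne.symm this.2]
    · have hb := hr3 b hb1 hb2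
      have hrev : b.rev = c ↔ b = c.rev := Fin.rev_eq_iff
      by_cases hbc : b = c
      · subst hbc
        simp [Ne.symm hb1, Ne.symm hb2, Ne.symm hb.1, Ne.symm hb.2, hk3 b hb1 hb2,
          hk3 _ hb.1 hb.2, hrev]
      · simp only [Ne.symm hb1, Ne.symm hb2, Ne.symm hb.1, Ne.symm hb.2, hbc, hk3 b hb1 hb2,
          hk3 _ hb.1 hb.2, hrev, false_and, if_false, zero_mul, mul_zero, add_zero, ite_self]

lemma flipInv_opB {z : Fin m} (hz : ∀ k, z ≤ k) {a : Fin (2*r+3)} (ha : a ≠ midI r) :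
    FlipInv z (mx r m (opB r m a)) := by
  have h := mx_EF (m := m) a 1
  rw [one_smul] at h
  rw [opB, h]
  refine FlipInv.sum _ fun j _ => ?_
  rcases (hz j).lt_or_eq with hj | rfl
  · exact flipInv_off hj a 1
  · rw [summand_zero hz]
    exact FlipInv.of_oneSite _ _ (oneSite_of_ne ha)

lemma flipInv_opB0 {z : Fin m} (hz : ∀ k, z ≤ k) : FlipInv z (mx r m (opB0 r m)) := by
  have h := mx_EF (r := r) (m := m) (midI r) qv
  rw [rev_midI] at h
  rw [opB0, map_add, h, mx_opKKinv, ← Finset.add_sum_erase _ _ (Finset.mem_univ z), add_right_comm]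
  refine FlipInv.add ?_ (FlipInv.sum _ fun j hj => ?_)
  · have h0 := summand_zero (r := r) hz (midI r) qv
    rw [rev_midI] at h0
    rw [h0, ← Function.update_eq_self z (fun _ : Fin m => Matrix.diagonal (kapi (midI r))),
      Function.update_idem, ← tens_update_add]
    exact FlipInv.of_oneSite _ _ oneSite_mid
  · have := flipInv_off ((hz j).lt_of_ne (Finset.ne_of_mem_erase hj).symm) (midI r) qv
    rwa [rev_midI] at this

lemma commute_R0op_of_mem {A : Module.End Kq (TP r m)} (hA : A ∈ LeviSet r m) :
    Commute (R0op r m) A := by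
  by_cases h : 0 < m
  swap
  · rw [R0op, dif_neg h]
    exact Commute.one_left _
  rw [commute_R0op_iff h]
  have hz : ∀ k, (⟨0, h⟩ : Fin m) ≤ k := fun k => Nat.zero_le _
  rcases hA with ((rfl | ⟨a, ha, rfl⟩) | ⟨a, rfl⟩) | ⟨a, rfl⟩
  · exact flipInv_opB0 hz
  · exact flipInv_opB hz ha.1
  · rw [opkk, map_mul, mx_opKK, mx_opKKinv, tens_mul]
    refine FlipInv.of_diagonal (d := fun j => kap a j * kapi a.rev j) _ (fun j => ?_)
      (Matrix.diagonal_mul_diagonal _ _)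
    rw [kapi_rev, mul_comm, ← kap_rev, Fin.rev_rev]
  · rw [opkkInv, map_mul, mx_opKK, mx_opKKinv, tens_mul]
    exact FlipInv.of_diagonal (d := fun j => kap a.rev j * kapi a j) _
      (fun j => kap_mul_kapi_rev a j) (Matrix.diagonal_mul_diagonal _ _)

end Flip

/-! ### Preservation of blocks and the operators `Ξ(x_σ^{(l)})` -/

section Blocks

variable {r m : ℕ}

/-- The operators all of whose matrix entries preserve, in each tensor position, the blocks
`{-r-3/2}`, `𝕀(2r+2)` and `{r+3/2}`. -/
def blockAlg (r m : ℕ) : Subalgebra Kq (Matrix (Fin m → Idx r) (Fin m → Idx r) Kq) where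
  carrier := {A | ∀ g f, A g f ≠ 0 → ∀ k, sameType (g k) (f k)}
  mul_mem' := by
    intro A B hA hB g f h
    obtain ⟨e, -, he⟩ := Finset.exists_ne_zero_of_sum_ne_zero (by rwa [Matrix.mul_apply] at h)
    exact fun k => (hA g e (left_ne_zero_of_mul he) k).trans (hB e f (right_ne_zero_of_mul he) k)
  add_mem' := by
    intro A B hA hB g f h
    by_cases hz : A g f = 0
    · refine hB g f fun h0 => h ?_
      rw [Matrix.add_apply, hz, h0, add_zero]
    · exact hA g f hz
  algebraMap_mem' := by
    intro c g f h
    rw [Matrix.algebraMap_matrix_apply] at h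
    by_cases hgf : g = f
    · subst hgf
      exact fun k => ⟨Iff.rfl, Iff.rfl⟩
    · simp [hgf] at h

lemma tens_mem_blockAlg {x : Fin m → Matrix (Idx r) (Idx r) Kq}
    (h : ∀ k a b, x k a b ≠ 0 → sameType a b) : tens x ∈ blockAlg r m := by
  intro g f hgf k
  rw [tens_apply] at hgf
  exact h k _ _ (Finset.prod_ne_zero_iff.1 hgf k (Finset.mem_univ k))

lemma diagonal_sameType (d : Idx r → Kq) (a b : Idx r) (h : Matrix.diagonal d a b ≠ 0) :
    sameType a b := by
  by_cases hab : a = b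
  · subst hab
    exact ⟨Iff.rfl, Iff.rfl⟩
  · simp [hab] at h

lemma sameType_lo_hi {a : Fin (2*r+3)} (h0 : 0 < (a : ℕ)) (h1 : (a : ℕ) < 2*r+2) :
    sameType (loI a) (hiI a) := by
  simp only [sameType, loI, hiI, topI, botI, Fin.ext_iff]
  omega

lemma opEE_mem_blockAlg {a : Fin (2*r+3)} (h0 : 0 < (a : ℕ)) (h1 : (a : ℕ) < 2*r+2) :
    mx r m (opEE r m a) ∈ blockAlg r m := by
  rw [mx_opEE]
  refine sum_mem fun j _ => tens_mem_blockAlg fun k b c h => ?_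
  unfold eFac at h
  split_ifs at h with h2 h3
  · rw [← Matrix.diagonal_one] at h
    exact diagonal_sameType _ _ _ h
  · have hbc : loI a = b ∧ hiI a = c := by
      by_contra hn
      exact h (by rw [Matrix.single_apply, if_neg hn])
    rw [← hbc.1, ← hbc.2]
    exact sameType_lo_hi h0 h1
  · exact diagonal_sameType _ _ _ h

lemma opFF_mem_blockAlg {a : Fin (2*r+3)} (h0 : 0 < (a : ℕ)) (h1 : (a : ℕ) < 2*r+2) :
    mx r m (opFF r m a) ∈ blockAlg r m := by
  rw [mx_opFF]
  refine sum_mem fun j _ => tens_mem_blockAlg fun k b c h => ?_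
  unfold fFac at h
  split_ifs at h with h2 h3
  · exact diagonal_sameType _ _ _ h
  · have hbc : hiI a = b ∧ loI a = c := by
      by_contra hn
      exact h (by rw [Matrix.single_apply, if_neg hn])
    rw [← hbc.1, ← hbc.2]
    exact ⟨(sameType_lo_hi h0 h1).1.symm, (sameType_lo_hi h0 h1).2.symm⟩
  · rw [← Matrix.diagonal_one] at h
    exact diagonal_sameType _ _ _ h

lemma opKK_mem_blockAlg (a : Fin (2*r+3)) : mx r m (opKK r m a) ∈ blockAlg r m := by
  rw [mx_opKK]
  exact tens_mem_blockAlg fun k => diagonal_sameType _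

lemma opKKinv_mem_blockAlg (a : Fin (2*r+3)) : mx r m (opKKinv r m a) ∈ blockAlg r m := by
  rw [mx_opKKinv]
  exact tens_mem_blockAlg fun k => diagonal_sameType _

lemma mem_blockAlg {A : Module.End Kq (TP r m)} (hA : A ∈ PhiL r m) :
    mx r m A ∈ blockAlg r m := by
  suffices h : PhiL r m ≤ (blockAlg r m).comap (mx r m).toAlgHom from h hA
  refine Algebra.adjoin_le fun A hA => ?_
  change mx r m A ∈ blockAlg r m
  rcases hA with ((rfl | ⟨a, ⟨-, h0, h1⟩, rfl⟩) | ⟨a, rfl⟩) | ⟨a, rfl⟩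
  · have h0 : 0 < (midI r : ℕ) := by simp [midI]
    have h1 : (midI r : ℕ) < 2*r+2 := by simp only [midI]; omega
    rw [opB0, map_add, map_add, map_smul, map_mul]
    exact add_mem (add_mem (opEE_mem_blockAlg h0 h1) (Subalgebra.smul_mem _
      (mul_mem (opFF_mem_blockAlg h0 h1) (opKKinv_mem_blockAlg _)) _)) (opKKinv_mem_blockAlg _)
  · have h2 : 0 < (a.rev : ℕ) := by rw [Fin.val_rev]; omega
    have h3 : (a.rev : ℕ) < 2*r+2 := by rw [Fin.val_rev]; omega
    rw [opB, map_add, map_mul]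
    exact add_mem (opEE_mem_blockAlg h0 h1)
      (mul_mem (opFF_mem_blockAlg h2 h3) (opKKinv_mem_blockAlg _))
  · rw [opkk, map_mul]
    exact mul_mem (opKK_mem_blockAlg _) (opKKinv_mem_blockAlg _)
  · rw [opkkInv, map_mul]
    exact mul_mem (opKK_mem_blockAlg _) (opKKinv_mem_blockAlg _)

lemma commute_of_mem_PhiL {R : Module.End Kq (TP r m)} (hR : ∀ A ∈ LeviSet r m, Commute R A)
    {A : Module.End Kq (TP r m)} (hA : A ∈ PhiL r m) : Commute R A := by
  have h : PhiL r m ≤ Subalgebra.centralizer Kq {R} :=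
    Algebra.adjoin_le fun A hA => Subalgebra.mem_centralizer_iff Kq |>.2 fun g hg => by
      rw [Set.mem_singleton_iff.1 hg]
      exact hR A hA
  exact Subalgebra.mem_centralizer_iff Kq |>.1 (h hA) R rfl

lemma sameType.innerI_iff {a b : Idx r} (h : sameType a b) : innerI r a ↔ innerI r b := by
  simp only [innerI, ne_eq, h.1, h.2]

lemma goodF_congr {l : ℕ} {g f : Fin m → Idx r} (h : ∀ k, sameType (g k) (f k)) :
    goodF r m l g ↔ goodF r m l f :=
  forall_congr' fun k => by rw [(h k).innerI_iff, (h k).1]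

lemma eq_sum_Mf (v : TP r m) : v = ∑ g, v g • Mf g := by
  funext f
  simp [Mf, Pi.single_apply]

/-- A block-preserving operator that commutes with all `Ψ(H_i)`, `i ≥ 1`, commutes with the
`Ξ(x_σ^{(l)})`. -/
lemma commute_X {l : ℕ} (σ : Equiv.Perm (Fin l)) {A X : Module.End Kq (TP r m)}
    (hX : ∀ v ∈ Vsub r m l, X v = opPerm r m σ v)
    (hX0 : ∀ f : Fin m → Idx r, ¬ goodF r m l f → X (Mf f) = 0)
    (hA : mx r m A ∈ blockAlg r m) (hR : ∀ p, Commute (Rsw r m p) A) : Commute X A := by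
  have hP : Commute (opPerm r m σ) A := by
    rw [opPerm]
    refine Commute.list_prod_left _ _ fun u hu => ?_
    obtain ⟨p, -, rfl⟩ := List.mem_map.1 (List.mem_reverse.1 hu)
    exact hR p
  rw [commute_iff_mx]
  intro g f
  refine congrFun ?_ g
  by_cases hf : goodF r m l f
  · have hAf : A (Mf f) ∈ Vsub r m l := by
      rw [eq_sum_Mf (A (Mf f))]
      refine sum_mem fun e _ => ?_
      by_cases he : A (Mf f) e = 0
      · rw [he, zero_smul]
        exact zero_mem _
      · rw [← mx_apply] at he
        exact Submodule.smul_mem _ _ (Submodule.subset_span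
          ⟨e, (goodF_congr (hA e f he)).2 hf, rfl⟩)
    rw [hX _ hAf, hX _ (Submodule.subset_span ⟨f, hf, rfl⟩)]
    exact LinearMap.congr_fun hP (Mf f)
  · rw [hX0 f hf, map_zero, eq_sum_Mf (A (Mf f)), map_sum]
    refine Finset.sum_eq_zero fun e _ => ?_
    by_cases he : A (Mf f) e = 0
    · rw [he, zero_smul, map_zero]
    · rw [← mx_apply] at he
      rw [map_smul, hX0 e fun h => hf ((goodF_congr (hA e f he)).1 h), smul_zero]

/-- The centraliser condition for `𝓗_m` may be checked on the generators. -/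
lemma commute_of_generators (Xi : DuplexH m →ₐ[Kq] (Module.End Kq (TP r m))ᵐᵒᵖ)
    {A : Module.End Kq (TP r m)} (hT : ∀ i, Commute (Xi (Tg m i)).unop A)
    (hx : ∀ l σ, Commute (Xi (Xg m l σ)).unop A) (h : DuplexH m) :
    Commute (Xi h).unop A := by
  obtain ⟨x, rfl⟩ := RingQuot.mkAlgHom_surjective Kq (DHrel m) h
  induction x using FreeAlgebra.induction with
  | grade0 c =>
    rw [AlgHom.commutes, AlgHom.commutes]
    exact Algebra.commutes c A
  | grade1 x =>
    rcases x with i | ⟨l, σ⟩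
    · exact hT i
    · exact hx l σ
  | mul a b ha hb =>
    rw [map_mul, map_mul, MulOpposite.unop_mul]
    exact hb.mul_left ha
  | add a b ha hb =>
    rw [map_add, map_add, MulOpposite.unop_add]
    exact ha.add_left hb

/-- `Ξ(x_e^{(l)})` is the projection to `V^{⊗l} ⊗ η_{r+3/2}^{⊗(m-l)}` along the other basis vectors, so
an operator commuting with it is block diagonal for this decomposition. -/
lemma goodF_of_commute {l : ℕ} {A X : Module.End Kq (TP r m)}
    (hX : ∀ v ∈ Vsub r m l, X v = opPerm r m (1 : Equiv.Perm (Fin l)) v)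
    (hX0 : ∀ f : Fin m → Idx r, ¬ goodF r m l f → X (Mf f) = 0)
    (hc : Commute X A) {g f : Fin m → Idx r} (h : mx r m A g f ≠ 0) :
    goodF r m l g ↔ goodF r m l f := by
  have hlen : lenPerm (1 : Equiv.Perm (Fin l)) = 0 := by
    rw [lenPerm, Finset.card_eq_zero, Finset.filter_eq_empty_iff]
    rintro p - ⟨h1, h2⟩
    exact lt_asymm h1 h2
  have h1 : opPerm r m (1 : Equiv.Perm (Fin l)) = 1 := by
    simp [opPerm, permWord, hlen, permWordAux]
  classical
  have hXv : ∀ (v : TP r m) g, X v g = if goodF r m l g then v g else 0 := by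
    intro v g
    have hXe : ∀ e : Fin m → Idx r, X (Mf e) = if goodF r m l e then Mf e else 0 := by
      intro e
      split_ifs with he
      · rw [hX _ (Submodule.subset_span ⟨e, he, rfl⟩), h1]; rfl
      · exact hX0 e he
    conv_lhs => rw [eq_sum_Mf v, map_sum]
    simp only [map_smul, hXe, Finset.sum_apply, Pi.smul_apply, smul_eq_mul]
    rw [Finset.sum_eq_single g]
    · split_ifs <;> simp [Mf]
    · intro e _ he
      split_ifs <;> simp [Mf, he.symm]
    · simp
  have hXf : X (Mf f) = if goodF r m l f then Mf f else 0 := by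
    funext e
    rw [hXv]
    by_cases he : f = e
    · subst he; split_ifs <;> rfl
    · split_ifs <;> simp [Mf, Ne.symm he]
  have h2 := (commute_iff_mx X A).1 hc g f
  rw [mx_apply] at h
  rw [hXv, hXf] at h2
  by_cases hg : goodF r m l g <;> by_cases hf : goodF r m l f <;> simp_all

end Blocks

/-! ### The commutant at `q = 1` and the conclusion -/

section Classical

open Polynomial

variable {r m : ℕ}

lemma spec_poly (p : ℚ[X]) : (algebraMap ℚ[X] Kq p, p.eval 1) ∈ specAlg :=
  ⟨p, 1, by simp, rfl, by simp⟩

lemma spec_unique {x : Kq} {c c' : ℚ} (h : (x, c) ∈ specAlg) (h' : (x, c') ∈ specAlg) :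
    c = c' := by
  obtain ⟨p, d, hd, hp, hx⟩ := h
  obtain ⟨p', d', hd', hp', hx'⟩ := h'
  have h : p * d' = p' * d := by
    apply RatFunc.algebraMap_injective ℚ
    rw [map_mul, map_mul, ← hx, ← hx']
    ring
  have := congrArg (eval 1) h
  simpa [hd, hd', hp, hp'] using this

lemma spec_q_sub : ((qv⁻¹ - qv, 0) : Kq × ℚ) ∈ specAlg := by
  simpa using specAlg.sub_mem spec_qv_inv spec_qv

/-- At `q = 1` the Hecke generator becomes the permutation of two tensor factors. -/
lemma SwapInv.spec {p q : Fin m} {A : Matrix (Fin m → Idx r) (Fin m → Idx r) Kq}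
    {B : Matrix (Fin m → Idx r) (Fin m → Idx r) ℚ} (hAB : SpecM A B) (hA : SwapInv p q A)
    (g f : Fin m → Idx r) :
    B (g ∘ Equiv.swap p q) f = B g (f ∘ Equiv.swap p q) := by
  have hs : ∀ e : Fin m → Idx r, e p = e q → e ∘ Equiv.swap p q = e := by
    intro e he
    funext k
    rw [Function.comp_apply, Equiv.swap_apply_def]
    split_ifs with h1 h2
    · rw [h1, he]
    · rw [h2, he]
    · rfl
  have h1 : ∀ (P : Prop) [Decidable P], ((if P then (qv⁻¹ - qv) * A g f else 0), (0 : ℚ)) ∈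
      specAlg := by
    intro P _
    split_ifs
    · simpa using specAlg.mul_mem spec_q_sub (hAB g f)
    · exact spec_zero
  have h2 : (qv⁻¹ * A g f, B g f) ∈ specAlg := by
    simpa using specAlg.mul_mem spec_qv_inv (hAB g f)
  have h3 : ∀ e e' : Fin m → Idx r, ∀ (P : Prop) [Decidable P],
      (A e e' + (if P then (qv⁻¹ - qv) * A g f else 0), B e e') ∈ specAlg := by
    intro e e' P _
    simpa using specAlg.add_mem (hAB e e') (h1 P)
  refine spec_unique (x := if g p = g q then qv⁻¹ * A g f else A (g ∘ Equiv.swap p q) f +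
      (if g q < g p then (qv⁻¹ - qv) * A g f else 0)) ?_ ?_
  · split_ifs with h
    · rw [hs g h]; exact h2
    · simpa using h3 _ _ True
    · simpa using h3 _ _ False
  · rw [hA g f]
    split_ifs with h
    · rw [hs f h]; exact h2
    · simpa using h3 _ _ True
    · simpa using h3 _ _ False

/-- At `q = 1` the Hecke generator `H_0` becomes the sign change in the first tensor factor. -/
lemma FlipInv.spec {z : Fin m} {A : Matrix (Fin m → Idx r) (Fin m → Idx r) Kq}
    {B : Matrix (Fin m → Idx r) (Fin m → Idx r) ℚ} (hAB : SpecM A B) (hA : FlipInv z A)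
    (g f : Fin m → Idx r) :
    B (Function.update g z (g z).rev) f = B g (Function.update f z (f z).rev) := by
  have h3 : ∀ e e' : Fin m → Idx r, ∀ (P : Prop) [Decidable P],
      (A e e' + (if P then (qv⁻¹ - qv) * A g f else 0), B e e') ∈ specAlg := by
    intro e e' P _
    split_ifs
    · simpa using specAlg.add_mem (hAB e e') (specAlg.mul_mem spec_q_sub (hAB g f))
    · simpa using hAB e e'
  refine spec_unique (h3 _ _ (g z < (g z).rev)) ?_
  rw [hA g f]
  exact h3 _ _ _

variable {B : Matrix (Fin m → Idx r) (Fin m → Idx r) ℚ}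

/-- Invariance under adjacent transpositions implies invariance under all permutations. -/
lemma perm_invariant
    (hs : ∀ (p : ℕ) (h : p + 1 < m) (g f : Fin m → Idx r),
      B (g ∘ Equiv.swap ⟨p, by omega⟩ ⟨p+1, h⟩) f = B g (f ∘ Equiv.swap ⟨p, by omega⟩ ⟨p+1, h⟩))
    (σ : Equiv.Perm (Fin m)) (g f : Fin m → Idx r) : B (g ∘ σ) (f ∘ σ) = B g f := by
  rcases m with _ | n
  · rw [Subsingleton.elim (g ∘ σ) g, Subsingleton.elim (f ∘ σ) f]
  let S : Submonoid (Equiv.Perm (Fin (n + 1))) :=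
    { carrier := {σ | ∀ g f, B (g ∘ σ) (f ∘ σ) = B g f}
      one_mem' := fun g f => rfl
      mul_mem' := fun {σ τ} hσ hτ g f => by
        rw [← hσ g f, ← hτ (g ∘ σ) (f ∘ σ)]; rfl }
  have hS : S = ⊤ := by
    rw [eq_top_iff, ← Equiv.Perm.mclosure_swap_castSucc_succ, Submonoid.closure_le]
    rintro _ ⟨i, rfl⟩ g f
    have h := hs i (by omega) g (f ∘ Equiv.swap i.castSucc i.succ)
    refine h.trans (congrArg _ ?_)
    funext k
    change f (Equiv.swap i.castSucc i.succ (Equiv.swap i.castSucc i.succ k)) = f k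
    rw [Equiv.swap_apply_self]
  have : σ ∈ S := hS ▸ Submonoid.mem_top σ
  exact this g f

/-- Sign changes in arbitrary positions are conjugate by permutations to the one in the first
position. -/
lemma flip_invariant (hperm : ∀ (σ : Equiv.Perm (Fin m)) g f, B (g ∘ σ) (f ∘ σ) = B g f)
    (hf : ∀ (h : 0 < m) (g f : Fin m → Idx r),
      B (Function.update g ⟨0, h⟩ (g ⟨0, h⟩).rev) f = B g (Function.update f ⟨0, h⟩ (f ⟨0, h⟩).rev))
    (ε : Fin m → Bool) (g f : Fin m → Idx r) : B (flipBy ε g) (flipBy ε f) = B g f := by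
  have h1 : ∀ (k : Fin m) (g f : Fin m → Idx r),
      B (Function.update g k (g k).rev) (Function.update f k (f k).rev) = B g f := by
    intro k g f
    have hm : 0 < m := k.pos
    set z : Fin m := ⟨0, hm⟩
    have hu : ∀ e : Fin m → Idx r, Function.update e k (e k).rev =
        Function.update (e ∘ Equiv.swap z k) z ((e ∘ Equiv.swap z k) z).rev ∘ Equiv.swap z k := by
      intro e
      funext j
      rw [Function.comp_apply, Function.comp_apply, Equiv.swap_apply_left]
      by_cases hj : j = k
      · subst hj
        rw [Equiv.swap_apply_right, Function.update_self, Function.update_self]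
      · have hj' : Equiv.swap z k j ≠ z := by
          rw [Ne, Equiv.swap_apply_eq_iff, Equiv.swap_apply_left]
          exact hj
        rw [Function.update_of_ne hj, Function.update_of_ne hj', Function.comp_apply,
          Equiv.swap_apply_self]
    rw [hu g, hu f, hperm, hf hm, Function.update_idem, Function.update_self, Fin.rev_rev,
      Function.update_eq_self, hperm]
  have h2 : ∀ (s : Finset (Fin m)) (g f : Fin m → Idx r),
      B (flipBy (fun k => decide (k ∈ s)) g) (flipBy (fun k => decide (k ∈ s)) f) = B g f := by
    intro s
    induction s using Finset.induction_on with
    | empty =>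
      intro g f
      congr 1
    | insert a s ha ih =>
      intro g f
      have hi : ∀ e : Fin m → Idx r, flipBy (fun k => decide (k ∈ insert a s)) e =
          Function.update (flipBy (fun k => decide (k ∈ s)) e) a
            ((flipBy (fun k => decide (k ∈ s)) e) a).rev := by
        intro e
        funext k
        by_cases hk : k = a
        · subst hk; simp [flipBy, ha]
        · simp [flipBy, hk]
      rw [hi, hi, h1, ih]
  have h3 := h2 (Finset.univ.filter fun k => ε k = true) g f
  simpa using h3

/-- A matrix that is invariant under the Weyl group and preserves each of the spaces
`V^{⊗l} ⊗ η_{r+3/2}^{⊗(m-l)}` preserves all the blocks: any index `f` can be moved by the Weyl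
group to one of the form `(inner, …, inner, r+3/2, …, r+3/2)`. -/
lemma type_of_invariant
    (hperm : ∀ (σ : Equiv.Perm (Fin m)) g f, B (g ∘ σ) (f ∘ σ) = B g f)
    (hflip : ∀ ε g f, B (flipBy ε g) (flipBy ε f) = B g f)
    (hgood : ∀ l ≤ m, ∀ g f, B g f ≠ 0 → goodF r m l f → goodF r m l g)
    (g f : Fin m → Idx r) (hB : B g f ≠ 0) (k : Fin m) : sameType (g k) (f k) := by
  -- Flip the entries equal to `-r-3/2`, then sort so that the entries equal to `r+3/2` come last.
  set ε : Fin m → Bool := fun k => decide (f k = botI r) with hε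
  have htb : topI r ≠ botI r := by simp [topI, botI, Fin.ext_iff]
  have hf' : ∀ k, flipBy ε f k ≠ botI r := by
    intro k h
    by_cases hk : f k = botI r
    · simp only [flipBy, hε, hk, decide_true, if_true, rev_bot] at h
      exact htb h
    · simp [flipBy, hε, hk] at h
  have key : ∀ k, sameType (flipBy ε g k) (flipBy ε f k) := by
    set f' := flipBy ε f
    set g' := flipBy ε g
    have hB' : B g' f' ≠ 0 := by rwa [hflip]
    set w : Fin m → ℕ := fun k => if f' k = topI r then 1 else 0 with hw
    have hmono := Tuple.monotone_sort w
    set σ := Tuple.sort w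
    have hex : ∃ l, ∀ k : Fin m, l ≤ (k : ℕ) → f' (σ k) = topI r :=
      ⟨m, fun k hk => absurd k.2 (not_lt.2 hk)⟩
    classical
    -- `Nat.find hex` is the number of entries different from `r+3/2`.
    have hl := Nat.find_spec hex
    have hlm : Nat.find hex ≤ m := Nat.find_le fun k hk => absurd k.2 (not_lt.2 hk)
    have hmin : ∀ k : Fin m, (k : ℕ) < Nat.find hex → f' (σ k) ≠ topI r := by
      intro k hk htop
      refine Nat.find_min hex hk fun j hj => ?_
      have := hmono (show k ≤ j from hj)
      by_contra hne
      simp [hw, htop, hne] at this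
    have hgf : goodF r m (Nat.find hex) (f' ∘ σ) := fun k =>
      ⟨fun hk => ⟨hf' _, hmin k hk⟩, fun hk => hl k hk⟩
    have hgg := hgood _ hlm (g' ∘ σ) (f' ∘ σ) (by rwa [hperm]) hgf
    intro k
    obtain ⟨j, rfl⟩ := σ.surjective k
    by_cases hj : (j : ℕ) < Nat.find hex
    · have h1 := (hgg j).1 hj
      have h2 := (hgf j).1 hj
      exact ⟨iff_of_false h1.2 h2.2, iff_of_false h1.1 h2.1⟩
    · have h1 := (hgg j).2 (not_lt.1 hj)
      have h2 := (hgf j).2 (not_lt.1 hj)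
      simp only [Function.comp_apply] at h1 h2
      rw [h1, h2]
      exact ⟨Iff.rfl, Iff.rfl⟩
  have hk := key k
  by_cases h : ε k = true
  · simp only [flipBy, h, if_true] at hk
    simpa using hk.rev
  · simpa [flipBy, h] using hk

end Classical

/-- **Theorem 3.5 (Levi-type ıSchur duality, first half).**
An operator `A ∈ End_K(V̄^⊗m)` commutes with `Ξ(h)` for every `h` in the duplex Hecke
algebra `𝓗_m` if and only if `A ∈ Φ(L_q^ı)`; that is,
`Φ(L_q^ı) = End_{𝓗_m}(V̄^⊗m)` inside `End_K(V̄^⊗m)`. -/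
theorem duplex_duality_first_half (r m : ℕ) (hr : 1 ≤ r) (hm : 2 ≤ m)
    (Xi : DuplexH m →ₐ[Kq] (Module.End Kq (TP r m))ᵐᵒᵖ)
    (hXiT : ∀ i : Fin m, (Xi (Tg m i)).unop = RopN r m (i : ℕ))
    (hXix : ∀ (l : Fin (m+1)) (σ : Equiv.Perm (Fin (l : ℕ))),
      ∀ v ∈ Vsub r m (l : ℕ), (Xi (Xg m l σ)).unop v = opPerm r m σ v)
    (hXix0 : ∀ (l : Fin (m+1)) (σ : Equiv.Perm (Fin (l : ℕ))) (f : Fin m → Idx r),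
      ¬ goodF r m (l : ℕ) f → (Xi (Xg m l σ)).unop (Mf f) = 0) :
    ∀ A : Module.End Kq (TP r m),
      (∀ h : DuplexH m, A * (Xi h).unop = (Xi h).unop * A) ↔ A ∈ PhiL r m := by
  -- The easy inclusion: the generators of `Φ` commute with those of `𝓗_m`.
  have hback : ∀ A ∈ PhiL r m, ∀ h, Commute (Xi h).unop A := by
    intro A hA
    have hsw : ∀ p, Commute (Rsw r m p) A := fun p =>
      commute_of_mem_PhiL (fun _ h => commute_Rsw_of_mem p h) hA
    refine commute_of_generators Xi (fun i => ?_) fun l σ =>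
      commute_X σ (hXix l σ) (hXix0 l σ) (mem_blockAlg hA) hsw
    rw [hXiT, RopN]
    split_ifs
    · exact commute_of_mem_PhiL (fun _ h => commute_R0op_of_mem h) hA
    · exact hsw _
  -- The commutant of `𝓗_m`, as an algebra of matrices.
  let Ω : Subalgebra Kq (Matrix (Fin m → Idx r) (Fin m → Idx r) Kq) :=
    (Subalgebra.centralizer Kq (Set.range fun h => (Xi h).unop)).map (mx r m).toAlgHom
  have hΩ : ∀ M ∈ Ω, ∃ A, mx r m A = M ∧ ∀ h, Commute (Xi h).unop A := by
    rintro _ ⟨A, hA, rfl⟩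
    exact ⟨A, rfl, fun h => (Subalgebra.mem_centralizer_iff Kq).1 hA _ ⟨h, rfl⟩⟩
  have hle : Ω ≤ phiMat r m := by
    refine le_of_spec_le ?_ fun P hP => ?_
    · rintro _ ⟨A, hA, rfl⟩
      refine ⟨A, (Subalgebra.mem_centralizer_iff Kq).2 ?_, rfl⟩
      rintro _ ⟨h, rfl⟩
      exact hback A hA h
    · obtain ⟨A, hAP, hA⟩ := hΩ _ hP
      have hspec : SpecM (mx r m A) (P.map (Polynomial.eval 1)) := by
        rw [hAP]
        exact fun g f => spec_poly (P g f)
      have hperm := perm_invariant (r := r) (B := P.map (Polynomial.eval 1)) fun p h g f => by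
        refine SwapInv.spec hspec ((commute_Rsw_iff h A).1 ?_) g f
        have := hA (Tg m ⟨p+1, h⟩)
        rwa [hXiT, RopN, if_neg (Nat.succ_ne_zero p)] at this
      have hflip := flip_invariant hperm fun h g f => by
        refine FlipInv.spec hspec ((commute_R0op_iff h A).1 ?_) g f
        have := hA (Tg m ⟨0, h⟩)
        rwa [hXiT, RopN, if_pos rfl] at this
      refine mem_of_invariant (specOf (phiMat r m))
        (deriva_Fm_mem _ deriva_Fm_mem_specOf deriva_cartan_mem_specOf) _ hperm hflip
        (type_of_invariant hperm hflip fun l hl g f hB hf => ?_)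
      -- Only the idempotents `x_e^{(l)}` are needed to see that the blocks are preserved.
      let l' : Fin (m+1) := ⟨l, Nat.lt_succ_of_le hl⟩
      refine (goodF_of_commute (l := l) (hXix l' 1) (hXix0 l' 1) (hA (Xg m l' 1)) ?_).2 hf
      rw [hAP]
      intro h0
      have h1 : P g f = 0 := by
        simpa using h0
      exact hB (by simp [h1])
  intro A
  refine ⟨fun h => ?_, fun hA h => (hback A hA h).eq.symm⟩
  have hA : mx r m A ∈ Ω := by
    refine ⟨A, (Subalgebra.mem_centralizer_iff Kq).2 ?_, rfl⟩
    rintro _ ⟨x, rfl⟩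
    exact (h x).symm
  obtain ⟨A', hA', hAA'⟩ := hle hA
  rwa [(mx r m).injective hAA'] at hA'
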